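/- arXiv:math/0202083 — 3 statements merged into one kernel-verified Lean document; each statement's English description precedes it below -/
import Mathlib

section
/- Let k > 0 be real. Then for every u ∈ ℂ, D_k(u) = Γ(k+1/2) Σ_{n=0}^∞ (u/2)^{2n}/(n! Γ(n+k+1/2)) + (u/(2k+1)) Γ(k+3/2) Σ_{n=0}^∞ (u/2)^{2n}/(n! Γ(n+k+3/2)), where both series converge absolutely. (Equivalently, D_k(u) = j_{k−1/2}(iu) + (u/(2k+1)) j_{k+1/2}(iu), with j_α the normalized spherical Bessel function j_α(z) = Γ(α+1) Σ_{n=0}^∞ (−1)ⁿ (z/2)^{2n}/(n! Γ(n+α+1)).) -/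
open MeasureTheory Filter Set

/-- The rank-one Dunkl kernel, defined by its integral representation. -/
noncomputable def Dk (k : ℝ) (u : ℂ) : ℂ :=
  ((Real.Gamma (k + 1/2) / (Real.Gamma (1/2) * Real.Gamma k) : ℝ) : ℂ) *
    ∫ t in Icc (-1 : ℝ) 1,
      Complex.exp ((t : ℂ) * u) * (((1 - t) ^ (k - 1) * (1 + t) ^ k : ℝ) : ℂ)

/-!
Write the weight as `(1 + t) (1 - t²)^(k-1)`. The summand `1` gives Poisson's integral
`∫ e^{tu} (1 - t²)^(k-1) dt`, in which only the even part `cosh (t u)` of the exponential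
contributes; expanding it, the moments `∫ t^(2n) (1 - t²)^(k-1) dt` become Beta integrals under
`x = t²`, and Legendre's duplication formula at half-integers turns the result into the first
series. The summand `t` is an integration by parts away from Poisson's integral with `k + 1` in
place of `k`, since `t (1 - t²)^(k-1)` is the derivative of `-(1 - t²)^k / (2k)`; this gives the
second series.
-/

theorem hasSum_integral_smul_of_norm_le {α ι 𝕜 E : Type*} [MeasurableSpace α] {μ : Measure α}
    [Countable ι] [NormedField 𝕜] [NormedAddCommGroup E] [NormedSpace ℝ E] [NormedSpace 𝕜 E]
    {F : ι → α → 𝕜} {f : α → 𝕜} {w : α → E} {M : ι → ℝ}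
    (hF : ∀ i, AEStronglyMeasurable (F i) μ) (hFM : ∀ i, ∀ᵐ a ∂μ, ‖F i a‖ ≤ M i)
    (hM : Summable M) (hw : Integrable w μ) (hf : ∀ᵐ a ∂μ, HasSum (F · a) (f a)) :
    HasSum (fun i ↦ ∫ a, F i a • w a ∂μ) (∫ a, f a • w a ∂μ) := by
  refine hasSum_integral_of_dominated_convergence (fun i a ↦ M i * ‖w a‖)
    (fun i ↦ (hF i).smul hw.aestronglyMeasurable) (fun i ↦ ?_)
    (ae_of_all _ fun a ↦ hM.mul_right _) ?_ ?_
  · filter_upwards [hFM i] with a ha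
    rw [norm_smul]
    gcongr
  · simpa only [tsum_mul_right] using hw.norm.const_mul _
  · filter_upwards [hf] with a ha using ha.smul_const _

section Parity

variable {E : Type*} [NormedAddCommGroup E] {f : ℝ → E} {a : ℝ}

theorem intervalIntegrable_neg_zero_of_even (hf : f.Even)
    (hfi : IntervalIntegrable f volume 0 a) : IntervalIntegrable f volume (-a) 0 := by
  rw [IntervalIntegrable.iff_comp_neg]
  simpa only [hf _, neg_neg, neg_zero] using hfi.symm

variable [NormedSpace ℝ E]

theorem integral_neg_self_of_even (hf : f.Even) (hfi : IntervalIntegrable f volume 0 a) :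
    ∫ x in -a..a, f x = 2 • ∫ x in 0..a, f x := by
  have hreflect : ∫ x in -a..0, f x = ∫ x in 0..a, f x := by
    simpa only [hf _, neg_zero] using (intervalIntegral.integral_comp_neg (a := 0) (b := a) f).symm
  rw [← intervalIntegral.integral_add_adjacent_intervals
    (intervalIntegrable_neg_zero_of_even hf hfi) hfi, hreflect, two_nsmul]

theorem integral_neg_self_of_odd (hf : f.Odd) : ∫ x in -a..a, f x = 0 := by
  have hreflect := intervalIntegral.integral_comp_neg (a := -a) (b := a) f
  simp only [hf _, intervalIntegral.integral_neg, neg_neg] at hreflect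
  have := IsAddTorsionFree.of_isTorsionFree ℝ E
  exact self_eq_neg.1 hreflect.symm

end Parity

section PoissonIntegral

open Complex

theorem Gamma_natCast_add_half_mul_four_pow_mul_factorial (n : ℕ) :
    Gamma (n + 1/2) * (4 ^ n * n.factorial) = (2 * n).factorial * Gamma (1/2) := by
  induction n with
  | zero => simp
  | succ n ih =>
    have hne : (n + 1/2 : ℂ) ≠ 0 := ne_zero_of_re_pos (by norm_num; positivity)
    have hrec : Gamma ((n + 1 : ℕ) + 1/2) = (n + 1/2) * Gamma (n + 1/2) := by
      rw [← Gamma_add_one _ hne]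
      push_cast
      ring_nf
    rw [hrec, show 2 * (n + 1) = 2 * n + 1 + 1 by ring]
    simp only [Nat.factorial_succ]
    push_cast
    linear_combination (4 * (n + 1/2) * (n + 1) : ℂ) * ih

/-- The even weight `(1 - t²)^(b-1)` on `[-1, 1]`, whose exponent follows the convention of the
Beta integral: it is integrable for `0 < re b`. -/
noncomputable def symmBetaWeight (b : ℂ) (t : ℝ) : ℂ := (1 - (t : ℂ) ^ 2) ^ (b - 1)

/-- Poisson's integral for the normalized spherical Bessel function: up to the factor
`Γ(b + 1/2) / (Γ(1/2) Γ(b))` it is `j_{b-1/2}(iu)`. -/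
noncomputable def poissonIntegral (b u : ℂ) : ℂ :=
  ∫ t : ℝ in -1..1, exp (t * u) * symmBetaWeight b t

variable {a b : ℂ}

theorem symmBetaWeight_even (b : ℂ) : (symmBetaWeight b).Even := fun t ↦ by
  simp only [symmBetaWeight, ofReal_neg, neg_sq]

theorem betaIntegrand_comp_sq (a b : ℂ) {t : ℝ} (ht : 0 < t) :
    (2 * t) • (((t ^ 2 : ℝ) : ℂ) ^ (a - 1) * (1 - ((t ^ 2 : ℝ) : ℂ)) ^ (b - 1)) =
      2 * ((t : ℂ) ^ (2 * a - 1) * symmBetaWeight b t) := by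
  have ht0 : (t : ℂ) ≠ 0 := ofReal_ne_zero.2 ht.ne'
  have hpow : (t : ℂ) * ((t ^ 2 : ℝ) : ℂ) ^ (a - 1) = (t : ℂ) ^ (2 * a - 1) := by
    rw [sq, ofReal_mul, mul_cpow_ofReal_nonneg ht.le ht.le, ← cpow_add _ _ ht0]
    nth_rw 1 [← cpow_one (t : ℂ)]
    rw [← cpow_add _ _ ht0]
    ring_nf
  rw [symmBetaWeight, ← hpow, real_smul]
  push_cast
  ring

theorem betaIntegral_eq_two_mul_integral (a b : ℂ) :
    betaIntegral a b = 2 * ∫ t : ℝ in 0..1, (t : ℂ) ^ (2 * a - 1) * symmBetaWeight b t := by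
  have hsubst := intervalIntegral.integral_deriv_smul_comp_of_deriv_nonneg (a := 0) (b := 1)
    (f := fun t : ℝ ↦ t ^ 2) (f' := fun t ↦ 2 * t)
    (g := fun x : ℝ ↦ (x : ℂ) ^ (a - 1) * (1 - (x : ℂ)) ^ (b - 1)) (by fun_prop)
    (fun t _ ↦ by simpa using hasDerivAt_pow 2 t)
    (fun t ht ↦ mul_nonneg zero_le_two (by simpa using ht.1.le))
  rw [zero_pow two_ne_zero, one_pow] at hsubst
  rw [betaIntegral, ← hsubst, ← intervalIntegral.integral_const_mul]
  exact intervalIntegral.integral_congr_Ioo_of_le zero_le_one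
    fun t ht ↦ betaIntegrand_comp_sq a b ht.1

theorem intervalIntegrable_cpow_mul_symmBetaWeight (ha : 0 < a.re) (hb : 0 < b.re) :
    IntervalIntegrable (fun t : ℝ ↦ (t : ℂ) ^ (2 * a - 1) * symmBetaWeight b t) volume 0 1 := by
  have hsubst := (intervalIntegral.integrable_deriv_smul_comp_iff_of_deriv_nonneg (a := 0) (b := 1)
    (f := fun t : ℝ ↦ t ^ 2) (f' := fun t ↦ 2 * t)
    (g := fun x : ℝ ↦ (x : ℂ) ^ (a - 1) * (1 - (x : ℂ)) ^ (b - 1)) (by fun_prop)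
    (fun t _ ↦ by simpa using hasDerivAt_pow 2 t)
    (fun t ht ↦ mul_nonneg zero_le_two (by simpa using ht.1.le))).2
    (by simpa using betaIntegral_convergent ha hb)
  refine (hsubst.const_mul (1/2 : ℂ)).congr_uIoo fun t ht ↦ ?_
  rw [uIoo_of_le zero_le_one] at ht
  simp only [Function.comp_apply, betaIntegrand_comp_sq a b ht.1]
  ring

theorem intervalIntegrable_symmBetaWeight (hb : 0 < b.re) :
    IntervalIntegrable (symmBetaWeight b) volume (-1) 1 := by
  have hpos : IntervalIntegrable (symmBetaWeight b) volume 0 1 := by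
    simpa using intervalIntegrable_cpow_mul_symmBetaWeight (a := 1/2) (by norm_num) hb
  exact (intervalIntegrable_neg_zero_of_even (symmBetaWeight_even b) hpos).trans hpos

theorem intervalIntegrable_mul_symmBetaWeight {f : ℝ → ℂ} (hf : Continuous f) (hb : 0 < b.re) :
    IntervalIntegrable (fun t ↦ f t * symmBetaWeight b t) volume (-1) 1 :=
  (intervalIntegrable_symmBetaWeight hb).continuousOn_mul hf.continuousOn

theorem betaIntegral_natCast_add_half (n : ℕ) (hb : 0 < b.re) :
    betaIntegral (n + 1/2) b =
      (2 * n).factorial * Gamma (1/2) * Gamma b / (4 ^ n * n.factorial * Gamma (n + b + 1/2)) := by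
  have hre : 0 < (n + 1/2 : ℂ).re := by norm_num; positivity
  have hn : (n.factorial : ℂ) ≠ 0 := Nat.cast_ne_zero.2 n.factorial_ne_zero
  rw [betaIntegral_eq_Gamma_mul_div _ _ hre hb, ← Gamma_natCast_add_half_mul_four_pow_mul_factorial,
    add_right_comm]
  field_simp

theorem integral_pow_two_mul_mul_symmBetaWeight (n : ℕ) (hb : 0 < b.re) :
    ∫ t : ℝ in -1..1, (t : ℂ) ^ (2 * n) * symmBetaWeight b t = betaIntegral (n + 1/2) b := by
  have hexp : 2 * (n + 1/2 : ℂ) - 1 = (2 * n : ℕ) := by push_cast; ring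
  have heven : (fun t : ℝ ↦ (t : ℂ) ^ (2 * n) * symmBetaWeight b t).Even := fun t ↦ by
    simp only [symmBetaWeight_even b t, ofReal_neg, (even_two_mul n).neg_pow]
  have hint : IntervalIntegrable (fun t : ℝ ↦ (t : ℂ) ^ (2 * n) * symmBetaWeight b t) volume 0 1 :=
    (intervalIntegrable_mul_symmBetaWeight (by fun_prop) hb).mono_set
      (by rw [uIcc_of_le zero_le_one, uIcc_of_le (by norm_num)]; gcongr; norm_num)
  simp only [integral_neg_self_of_even heven hint, betaIntegral_eq_two_mul_integral, hexp,
    cpow_natCast, nsmul_eq_mul, Nat.cast_ofNat]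

theorem poissonIntegral_eq_integral_cosh (hb : 0 < b.re) (u : ℂ) :
    poissonIntegral b u = ∫ t : ℝ in -1..1, cosh (t * u) * symmBetaWeight b t := by
  have hodd : (fun t : ℝ ↦ sinh (t * u) * symmBetaWeight b t).Odd := fun t ↦ by
    simp only [symmBetaWeight_even b t, ofReal_neg, neg_mul, sinh_neg]
  simp only [poissonIntegral, ← cosh_add_sinh, add_mul]
  rw [intervalIntegral.integral_add (intervalIntegrable_mul_symmBetaWeight (by fun_prop) hb)
    (intervalIntegrable_mul_symmBetaWeight (by fun_prop) hb), integral_neg_self_of_odd hodd,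
    add_zero]

theorem hasSum_betaIntegral_poissonIntegral (hb : 0 < b.re) (u : ℂ) :
    HasSum (fun n : ℕ ↦ u ^ (2 * n) / (2 * n).factorial * betaIntegral (n + 1/2) b)
      (poissonIntegral b u) := by
  have hle : (-1 : ℝ) ≤ 1 := by norm_num
  have hbound (n : ℕ) {t : ℝ} (ht : t ∈ Ioc (-1) 1) :
      ‖(t * u) ^ (2 * n) / (2 * n).factorial‖ ≤ ‖u‖ ^ (2 * n) / (2 * n).factorial := by
    have htu : ‖t * u‖ ≤ ‖u‖ := by
      rw [norm_mul, norm_real]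
      exact mul_le_of_le_one_left (norm_nonneg u) (abs_le.2 ⟨ht.1.le, ht.2⟩)
    rw [norm_div, norm_pow, norm_natCast]
    gcongr
  have hsum := hasSum_integral_smul_of_norm_le (μ := volume.restrict (Ioc (-1) 1))
    (F := fun n (t : ℝ) ↦ (t * u) ^ (2 * n) / (2 * n).factorial)
    (fun n ↦ (by fun_prop : Continuous _).aestronglyMeasurable)
    (fun n ↦ ae_restrict_of_forall_mem measurableSet_Ioc fun t ht ↦ hbound n ht)
    (Real.hasSum_cosh ‖u‖).summable
    ((intervalIntegrable_iff_integrableOn_Ioc_of_le hle).1 (intervalIntegrable_symmBetaWeight hb))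
    (ae_of_all _ fun t : ℝ ↦ hasSum_cosh (t * u))
  simp only [smul_eq_mul, ← intervalIntegral.integral_of_le hle,
    ← poissonIntegral_eq_integral_cosh hb] at hsum
  have hterm (n : ℕ) :
      ∫ t : ℝ in -1..1, (t * u) ^ (2 * n) / (2 * n).factorial * symmBetaWeight b t =
        u ^ (2 * n) / (2 * n).factorial * betaIntegral (n + 1/2) b := by
    rw [← integral_pow_two_mul_mul_symmBetaWeight n hb, ← intervalIntegral.integral_const_mul]
    congr with t
    ring
  simpa only [hterm] using hsum

theorem hasSum_poissonIntegral_div (hb : 0 < b.re) (u : ℂ) :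
    HasSum (fun n : ℕ ↦ (u / 2) ^ (2 * n) / (n.factorial * Gamma (n + b + 1/2)))
      (poissonIntegral b u / (Gamma (1/2) * Gamma b)) := by
  have hterm (n : ℕ) :
      u ^ (2 * n) / (2 * n).factorial * betaIntegral (n + 1/2) b / (Gamma (1/2) * Gamma b) =
        (u / 2) ^ (2 * n) / (n.factorial * Gamma (n + b + 1/2)) := by
    have hhalf : Gamma (1/2) ≠ 0 := Gamma_ne_zero_of_re_pos (by norm_num)
    have hGb : Gamma b ≠ 0 := Gamma_ne_zero_of_re_pos hb
    have h2n : ((2 * n).factorial : ℂ) ≠ 0 := Nat.cast_ne_zero.2 (2 * n).factorial_ne_zero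
    rw [betaIntegral_natCast_add_half n hb, div_pow, pow_mul 2, show (2 : ℂ) ^ 2 = 4 by norm_num]
    field_simp
  simpa only [hterm] using
    (hasSum_betaIntegral_poissonIntegral hb u).div_const (Gamma (1/2) * Gamma b)

theorem continuous_symmBetaWeight_add_one (hb : 0 < b.re) :
    Continuous (symmBetaWeight (b + 1)) := by
  have h := (continuous_ofReal_cpow_const hb).comp (by fun_prop : Continuous fun t : ℝ ↦ 1 - t ^ 2)
  refine h.congr fun t ↦ ?_
  simp [symmBetaWeight]

theorem hasDerivAt_symmBetaWeight_add_one (b : ℂ) {t : ℝ} (ht : t ∈ Ioo (-1) 1) :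
    HasDerivAt (symmBetaWeight (b + 1)) (-(2 * b) * (t * symmBetaWeight b t)) t := by
  have hbase : HasDerivAt (fun z : ℂ ↦ 1 - z ^ 2) (-(2 * (t : ℂ))) (t : ℂ) := by
    simpa using (hasDerivAt_pow 2 (t : ℂ)).const_sub 1
  have hmem : 1 - (t : ℂ) ^ 2 ∈ slitPlane := by
    exact_mod_cast ofReal_mem_slitPlane.2 (by nlinarith [ht.1, ht.2] : 0 < 1 - t ^ 2)
  refine ((hbase.cpow_const (c := b) hmem).comp_ofReal.congr_deriv ?_).congr_of_eventuallyEq ?_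
  · rw [symmBetaWeight]
    ring
  · exact Eventually.of_forall fun t ↦ by simp [symmBetaWeight]

theorem integral_exp_mul_self_mul_symmBetaWeight (hb : 0 < b.re) (u : ℂ) :
    ∫ t : ℝ in -1..1, exp (t * u) * (t * symmBetaWeight b t) =
      u / (2 * b) * poissonIntegral (b + 1) u := by
  have hb0 : b ≠ 0 := ne_zero_of_re_pos hb
  have hexp (t : ℝ) : HasDerivAt (fun t : ℝ ↦ exp (t * u)) (exp (t * u) * u) t := by
    simpa using ((hasDerivAt_id (t : ℂ)).mul_const u).cexp.comp_ofReal
  have hparts := intervalIntegral.integral_mul_deriv_eq_deriv_mul_of_hasDerivAt (a := -1) (b := 1)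
    (by fun_prop) (continuous_symmBetaWeight_add_one hb).continuousOn (fun t _ ↦ hexp t)
    (fun t ht ↦ hasDerivAt_symmBetaWeight_add_one b (by simpa using ht))
    ((by fun_prop : Continuous fun t : ℝ ↦ exp (t * u) * u).intervalIntegrable _ _)
    ((intervalIntegrable_mul_symmBetaWeight continuous_ofReal hb).const_mul _)
  have hbdry (t : ℝ) (ht : t ^ 2 = 1) : symmBetaWeight (b + 1) t = 0 := by
    rw [symmBetaWeight, ← ofReal_pow, ht]
    simpa using hb0
  simp only [hbdry 1 (by norm_num), hbdry (-1) (by norm_num)] at hparts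
  have hleft : ∫ t : ℝ in -1..1, exp (t * u) * (-(2 * b) * (t * symmBetaWeight b t)) =
      -(2 * b) * ∫ t : ℝ in -1..1, exp (t * u) * (t * symmBetaWeight b t) := by
    simp only [mul_left_comm _ (-(2 * b)), intervalIntegral.integral_const_mul]
  have hright : ∫ t : ℝ in -1..1, exp (t * u) * u * symmBetaWeight (b + 1) t =
      u * poissonIntegral (b + 1) u := by
    simp only [poissonIntegral, mul_comm _ u, mul_assoc, intervalIntegral.integral_const_mul]
  rw [hleft, hright] at hparts
  rw [div_mul_eq_mul_div, eq_div_iff (by simpa using hb0)]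
  linear_combination -hparts

theorem ofReal_one_sub_rpow_mul_one_add_rpow {k t : ℝ} (ht : t ∈ Ioo (-1) 1) :
    (((1 - t) ^ (k - 1) * (1 + t) ^ k : ℝ) : ℂ) = (1 + t) * symmBetaWeight k t := by
  have hneg : 0 < 1 - t := by linarith [ht.2]
  have hpos : 0 < 1 + t := by linarith [ht.1]
  have hreal : (1 - t) ^ (k - 1) * (1 + t) ^ k = (1 + t) * (1 - t ^ 2) ^ (k - 1) := by
    rw [show 1 - t ^ 2 = (1 - t) * (1 + t) by ring, Real.mul_rpow hneg.le hpos.le,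
      Real.rpow_sub_one hpos.ne']
    field_simp
  rw [hreal, symmBetaWeight, ofReal_mul, ofReal_cpow (by nlinarith)]
  push_cast
  rfl

theorem Dk_eq_poissonIntegral {k : ℝ} (hk : 0 < k) (u : ℂ) :
    Dk k u = Gamma (k + 1/2) / (Gamma (1/2) * Gamma k) *
      (poissonIntegral k u + u / (2 * k) * poissonIntegral (k + 1) u) := by
  have hk' : 0 < (k : ℂ).re := by simpa using hk
  have hsplit : ∫ t in Icc (-1 : ℝ) 1, exp (t * u) * (((1 - t) ^ (k - 1) * (1 + t) ^ k : ℝ) : ℂ) =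
      ∫ t : ℝ in -1..1, exp (t * u) * symmBetaWeight k t +
        exp (t * u) * (t * symmBetaWeight k t) := by
    rw [intervalIntegral.integral_of_le (by norm_num), integral_Icc_eq_integral_Ioo,
      integral_Ioc_eq_integral_Ioo]
    refine setIntegral_congr_fun measurableSet_Ioo fun t ht ↦ ?_
    simp only [ofReal_one_sub_rpow_mul_one_add_rpow ht]
    ring
  have hmul : IntervalIntegrable (fun t : ℝ ↦ exp (t * u) * (t * symmBetaWeight k t))
      volume (-1) 1 := by
    simp only [← mul_assoc]
    exact intervalIntegrable_mul_symmBetaWeight (by fun_prop) hk'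
  rw [Dk, hsplit, intervalIntegral.integral_add
    (intervalIntegrable_mul_symmBetaWeight (by fun_prop) hk') hmul, ← poissonIntegral,
    integral_exp_mul_self_mul_symmBetaWeight hk']
  push_cast [← Gamma_ofReal]
  rfl

end PoissonIntegral

/-- The Bessel-series expansion of the rank-one Dunkl kernel:
`D_k(u) = j_{k-1/2}(iu) + (u/(2k+1)) j_{k+1/2}(iu)`, written out as two absolutely
convergent power series. -/
theorem dunkl_stmt8 (k : ℝ) (hk : 0 < k) (u : ℂ) :
    Summable (fun n : ℕ =>
      ‖(u / 2) ^ (2 * n) / ((n.factorial : ℂ) * ((Real.Gamma ((n : ℝ) + k + 1/2) : ℝ) : ℂ))‖) ∧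
    Summable (fun n : ℕ =>
      ‖(u / 2) ^ (2 * n) / ((n.factorial : ℂ) * ((Real.Gamma ((n : ℝ) + k + 3/2) : ℝ) : ℂ))‖) ∧
    Dk k u =
      ((Real.Gamma (k + 1/2) : ℝ) : ℂ) *
          ∑' n : ℕ, (u / 2) ^ (2 * n) /
            ((n.factorial : ℂ) * ((Real.Gamma ((n : ℝ) + k + 1/2) : ℝ) : ℂ))
        + (u / (2 * (k : ℂ) + 1)) * ((Real.Gamma (k + 3/2) : ℝ) : ℂ) *
          ∑' n : ℕ, (u / 2) ^ (2 * n) /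
            ((n.factorial : ℂ) * ((Real.Gamma ((n : ℝ) + k + 3/2) : ℝ) : ℂ)) := by
  have hfirst := hasSum_poissonIntegral_div (b := k) (by simpa using hk) u
  have hsecond := hasSum_poissonIntegral_div (b := k + 1) (by norm_num; linarith) u
  have hshift (n : ℕ) : (n + (k + 1) + 1/2 : ℂ) = n + k + 3/2 := by ring
  simp only [hshift] at hsecond
  have hk0 : (k : ℂ) ≠ 0 := Complex.ofReal_ne_zero.2 hk.ne'
  have hk_half : (k + 1/2 : ℂ) ≠ 0 := Complex.ne_zero_of_re_pos (by norm_num; positivity)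
  have hk2 : (k * 2 + 1 : ℂ) ≠ 0 := by contrapose! hk_half; linear_combination hk_half / 2
  have hGk : Complex.Gamma (k + 1) = k * Complex.Gamma k := Complex.Gamma_add_one _ hk0
  have hGk3 : Complex.Gamma (k + 3/2) = (k + 1/2) * Complex.Gamma (k + 1/2) := by
    rw [← Complex.Gamma_add_one _ hk_half]
    ring_nf
  push_cast [← Complex.Gamma_ofReal]
  refine ⟨hfirst.summable.norm, hsecond.summable.norm, ?_⟩
  rw [Dk_eq_poissonIntegral hk, hfirst.tsum_eq, hsecond.tsum_eq, hGk, hGk3]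
  field_simp
end

section
/- Let k > 0 be real. Then lim_{s→+∞} s^k e^{−is} D_k(is) = e^{−iπk/2} Γ(2k+1)/(2^k Γ(k+1)), and lim_{s→+∞} s^k e^{is} D_k(−is) = e^{iπk/2} Γ(2k+1)/(2^k Γ(k+1)), where s ranges over positive reals. -/
open MeasureTheory Filter Set

/-!
In the variable `x = (1 - t) / 2` the Dunkl kernel is Euler's integral for a Kummer function with
exponents `u = k` and `v = k + 1`. For `z = i s` with `s > 0`, Cauchy's theorem moves the segment
`[0, 1]` to the other three sides of the unit square above it. The top side is exponentially small.
The vertical sides are Laplace integrals, to which Watson's lemma applies: the left one is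
asymptotic to `I ^ u * Γ(u) * s ^ (-u)` and the right one has the lower order `s ^ (-v)`.
Legendre's duplication formula gives the constant, and complex conjugation the other half-axis.
-/

section CauchyRectangle

open Complex Topology Interval

lemma tendsto_intervalIntegral_nhdsGT_left {E : Type*} [NormedAddCommGroup E] [NormedSpace ℝ E]
    {F : ℝ → E} {a b : ℝ} (hab : a < b) (hF : IntervalIntegrable F volume a b) :
    Tendsto (fun t => ∫ y in t..b, F y) (𝓝[>] a) (𝓝 (∫ y in a..b, F y)) := by
  have hcont := intervalIntegral.continuousOn_primitive_interval_left
    ((intervalIntegrable_iff' (by finiteness)).1 hF)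
  rw [uIcc_of_le hab.le] at hcont
  exact (hcont a (left_mem_Icc.2 hab.le)).mono_left
    (nhdsWithin_le_of_mem (mem_of_superset (Ioc_mem_nhdsGT hab) Ioc_subset_Icc_self))

variable {E : Type*} [NormedAddCommGroup E] [NormedSpace ℂ E] {f : ℂ → E} {a b h : ℝ}

lemma integral_boundary_rect_eq_zero_above_bottom {ε : ℝ} (hab : a ≤ b) (hε : ε ∈ Ioc 0 h)
    (hc : ContinuousOn f (Icc a b ×ℂ Ioc 0 h))
    (hd : DifferentiableOn ℂ f (Ioo a b ×ℂ Ioo 0 h)) :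
    (∫ x in a..b, f (x + ε * I)) - (∫ x in a..b, f (x + h * I)) +
      I • (∫ y in ε..h, f (b + y * I)) - I • (∫ y in ε..h, f (a + y * I)) = 0 := by
  have hcauchy := integral_boundary_rect_eq_zero_of_continuousOn_of_differentiableOn f
    (a + ε * I) (b + h * I)
  simp only [add_re, ofReal_re, mul_re, I_re, mul_zero, ofReal_im, I_im, mul_one, sub_self,
    add_zero, add_im, mul_im, zero_add, uIcc_of_le hab, uIcc_of_le hε.2, min_eq_left hab,
    max_eq_right hab, min_eq_left hε.2, max_eq_right hε.2] at hcauchy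
  refine hcauchy (hc.mono ?_) (hd.mono ?_)
  · exact inter_subset_inter_right _ (preimage_mono fun y hy => ⟨hε.1.trans_le hy.1, hy.2⟩)
  · exact inter_subset_inter_right _ (preimage_mono (Ioo_subset_Ioo_left hε.1.le))

theorem integral_boundary_rect_eq_zero_of_dominated_bottom (hab : a ≤ b) (hh : 0 < h)
    (hc : ContinuousOn f (Icc a b ×ℂ Ioc 0 h))
    (hd : DifferentiableOn ℂ f (Ioo a b ×ℂ Ioo 0 h))
    (hleft : IntervalIntegrable (fun y : ℝ => f (a + y * I)) volume 0 h)
    (hright : IntervalIntegrable (fun y : ℝ => f (b + y * I)) volume 0 h)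
    {bound : ℝ → ℝ} (hbound : IntervalIntegrable bound volume a b)
    (hle : ∀ x ∈ Ioo a b, ∀ y ∈ Ioc 0 h, ‖f (x + y * I)‖ ≤ bound x)
    (hlim : ∀ x ∈ Ioo a b, Tendsto (fun y : ℝ => f (x + y * I)) (𝓝[>] 0) (𝓝 (f x))) :
    (∫ x in a..b, f x) - (∫ x in a..b, f (x + h * I)) +
      I • (∫ y in 0..h, f (b + y * I)) - I • (∫ y in 0..h, f (a + y * I)) = 0 := by
  have hmem : ∀ᶠ ε : ℝ in 𝓝[>] 0, ε ∈ Ioc 0 h := Ioc_mem_nhdsGT hh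
  have hIoo : ∀ᵐ x : ℝ, x ∈ Ι a b → x ∈ Ioo a b := by
    filter_upwards [Measure.ae_ne volume b] with x hxb hx
    rw [uIoc_of_le hab] at hx
    exact ⟨hx.1, hx.2.lt_of_ne hxb⟩
  have hbottom : Tendsto (fun ε : ℝ => ∫ x in a..b, f (x + ε * I)) (𝓝[>] 0)
      (𝓝 (∫ x in a..b, f x)) := by
    refine intervalIntegral.tendsto_integral_filter_of_dominated_convergence bound ?_ ?_ hbound
      (hIoo.mono fun x hx hx' => hlim x (hx hx'))
    · filter_upwards [hmem] with ε hε
      rw [uIoc_of_le hab]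
      refine (hc.comp (f := fun x : ℝ => (x + ε * I : ℂ)) (by fun_prop) fun x hx => ?_).mono
        Ioc_subset_Icc_self |>.aestronglyMeasurable measurableSet_Ioc
      simpa [mem_reProdIm] using ⟨hx, hε⟩
    · filter_upwards [hmem] with ε hε
      exact hIoo.mono fun x hx hx' => hle x (hx hx') ε hε
  have htotal := ((hbottom.sub_const (∫ x in a..b, f (x + h * I))).add
    ((tendsto_intervalIntegral_nhdsGT_left hh hright).const_smul I)).sub
      ((tendsto_intervalIntegral_nhdsGT_left hh hleft).const_smul I)
  refine tendsto_nhds_unique (htotal.congr' ?_) tendsto_const_nhds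
  filter_upwards [hmem] with ε hε
  exact integral_boundary_rect_eq_zero_above_bottom hab hε hc hd

end CauchyRectangle

section Watson

open Complex Topology Interval

variable {E : Type*} [NormedAddCommGroup E] [NormedSpace ℂ E] {u : ℂ} {g : ℝ → E}

lemma mellinConvergent_exp_neg (hu : 0 < u.re) :
    MellinConvergent (fun t => (Real.exp (-t) : ℂ)) u := by
  simpa only [MellinConvergent, smul_eq_mul, mul_comm] using GammaIntegral_convergent hu

lemma mellin_exp_neg_smul_const [CompleteSpace E] (hu : 0 < u.re) (L : E) :
    mellin (fun t => (Real.exp (-t) : ℂ) • L) u = Gamma u • L := by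
  simp only [mellin, ← smul_assoc, integral_smul_const]
  rw [Gamma_eq_integral hu, GammaIntegral_eq_mellin, mellin]

lemma cpow_smul_mellin_exp_neg_mul_smul {s : ℝ} (hs : 0 < s) (u : ℂ) (g : ℝ → E) :
    (s : ℂ) ^ u • mellin (fun y => (Real.exp (-(s * y)) : ℂ) • g y) u =
      mellin (fun t => (Real.exp (-t) : ℂ) • g (t / s)) u := by
  have hscale := mellin_comp_mul_left (fun t => (Real.exp (-t) : ℂ) • g (t / s)) u hs
  simp only [mul_div_cancel_left₀ _ hs.ne'] at hscale
  rw [hscale, smul_smul, ← cpow_add _ _ (ofReal_ne_zero.2 hs.ne'), add_neg_cancel, cpow_zero,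
    one_smul]

theorem tendsto_cpow_smul_mellin_exp_neg_mul_smul [CompleteSpace E] (hu : 0 < u.re)
    (hg : StronglyMeasurable g) {C : ℝ} (hC : ∀ y, 0 < y → ‖g y‖ ≤ C) {L : E}
    (hL : Tendsto g (𝓝[>] 0) (𝓝 L)) :
    Tendsto (fun s : ℝ => (s : ℂ) ^ u • mellin (fun y => (Real.exp (-(s * y)) : ℂ) • g y) u)
      atTop (𝓝 (Gamma u • L)) := by
  rw [← mellin_exp_neg_smul_const hu]
  refine Tendsto.congr' (f₁ := fun s : ℝ => mellin (fun t => (Real.exp (-t) : ℂ) • g (t / s)) u)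
    ?_ ?_
  · filter_upwards [eventually_gt_atTop 0] with s hs
    exact (cpow_smul_mellin_exp_neg_mul_smul hs u g).symm
  have hconv := mellinConvergent_exp_neg hu
  refine tendsto_integral_filter_of_dominated_convergence
    (fun t => ‖(t : ℂ) ^ (u - 1) • (Real.exp (-t) : ℂ)‖ * C) ?_ ?_ (hconv.norm.mul_const C) ?_
  · refine Eventually.of_forall fun s => ?_
    simp only [← smul_assoc]
    exact hconv.aestronglyMeasurable.smul
      (hg.comp_measurable (measurable_id.div_const s)).aestronglyMeasurable
  · filter_upwards [eventually_gt_atTop 0] with s hs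
    filter_upwards [ae_restrict_mem measurableSet_Ioi] with t ht
    rw [← smul_assoc, norm_smul]
    gcongr
    exact hC _ (div_pos ht hs)
  · filter_upwards [ae_restrict_mem measurableSet_Ioi] with t ht
    have hdiv : Tendsto (fun s : ℝ => t / s) atTop (𝓝[>] 0) :=
      tendsto_nhdsWithin_iff.2 ⟨tendsto_const_nhds.div_atTop tendsto_id,
        (eventually_gt_atTop 0).mono fun s hs => div_pos ht hs⟩
    exact ((hL.comp hdiv).const_smul _).const_smul _

theorem tendsto_cpow_smul_integral_cpow_smul_exp_neg_mul_smul [CompleteSpace E] (hu : 0 < u.re)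
    {b : ℝ} (hb : 0 < b) (hg : ContinuousOn g (Icc 0 b)) :
    Tendsto (fun s : ℝ => (s : ℂ) ^ u •
      ∫ y in 0..b, (y : ℂ) ^ (u - 1) • (Real.exp (-(s * y)) : ℂ) • g y)
      atTop (𝓝 (Gamma u • g 0)) := by
  obtain ⟨C, hC⟩ := isCompact_Icc.exists_bound_of_continuousOn hg
  have hmeas : StronglyMeasurable ((Ioc 0 b).indicator g) := by
    have hext : EqOn (IccExtend hb.le ((Icc 0 b).domRestrict g)) g (Ioc 0 b) := fun y hy =>
      IccExtend_of_mem hb.le _ (Ioc_subset_Icc_self hy)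
    rw [← indicator_congr hext]
    exact hg.domRestrict.Icc_extend'.stronglyMeasurable.indicator measurableSet_Ioc
  have hbdd (y : ℝ) (_ : 0 < y) : ‖(Ioc 0 b).indicator g y‖ ≤ C := by
    by_cases hy : y ∈ Ioc 0 b
    · simpa only [indicator_of_mem hy] using hC y (Ioc_subset_Icc_self hy)
    · simpa only [indicator_of_notMem hy, norm_zero] using
        (norm_nonneg _).trans (hC 0 (left_mem_Icc.2 hb.le))
  have hlim : Tendsto ((Ioc 0 b).indicator g) (𝓝[>] 0) (𝓝 (g 0)) := by
    refine ((hg 0 (left_mem_Icc.2 hb.le)).mono_left (nhdsWithin_le_of_mem ?_)).congr' ?_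
    · exact mem_of_superset (Ioc_mem_nhdsGT hb) Ioc_subset_Icc_self
    · filter_upwards [Ioc_mem_nhdsGT hb] with y hy
      rw [indicator_of_mem hy]
  convert tendsto_cpow_smul_mellin_exp_neg_mul_smul hu hmeas hbdd hlim using 3 with s
  have hcut (y : ℝ) : (y : ℂ) ^ (u - 1) • (Real.exp (-(s * y)) : ℂ) • (Ioc 0 b).indicator g y =
      (Ioc 0 b).indicator (fun y => (y : ℂ) ^ (u - 1) • (Real.exp (-(s * y)) : ℂ) • g y) y := by
    simp only [indicator_apply, smul_ite, smul_zero]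
  simp only [mellin, hcut]
  rw [setIntegral_indicator measurableSet_Ioc, inter_eq_right.2 Ioc_subset_Ioi_self,
    intervalIntegral.integral_of_le hb.le]

end Watson

section KummerIntegral

open Complex Topology Interval

/-- The integrand of Euler's integral for Kummer's function `₁F₁(u; u + v; z)`, extended to complex
`w` with principal branches; it is holomorphic in the upper half-plane. -/
noncomputable def kummerIntegrand (u v z w : ℂ) : ℂ :=
  exp (z * w) * (w ^ (u - 1) * (1 - w) ^ (v - 1))

/-- Euler's integral for Kummer's function, unnormalised: `Γ(u) Γ(v) / Γ(u + v) · ₁F₁(u; u + v; z)`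
when `u` and `v` have positive real part. -/
noncomputable def kummerIntegral (u v z : ℂ) : ℂ :=
  ∫ x : ℝ in 0..1, kummerIntegrand u v z x

/-- The Laplace integral to which the Kummer integral reduces on a vertical edge of the square
`[0, 1] × [0, 1]`: up to a constant factor, the left edge has `c = I`, and the right edge has
`c = -I` and the exponents interchanged. -/
noncomputable def kummerEdgeIntegral (u v c : ℂ) (s : ℝ) : ℂ :=
  ∫ y : ℝ in 0..1, (y : ℂ) ^ (u - 1) * (Real.exp (-(s * y)) * (1 - c * y) ^ (v - 1))

variable {u v z w : ℂ} {s : ℝ}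

lemma differentiableAt_kummerIntegrand (hw : w ∈ slitPlane) (hw' : 1 - w ∈ slitPlane) :
    DifferentiableAt ℂ (kummerIntegrand u v z) w := by
  exact (differentiableAt_id.const_mul z).cexp.mul
    ((differentiableAt_id.cpow_const hw).mul ((differentiableAt_id.const_sub 1).cpow_const hw'))

lemma differentiableAt_kummerIntegrand_of_im_pos (hw : 0 < w.im) :
    DifferentiableAt ℂ (kummerIntegrand u v z) w := by
  apply differentiableAt_kummerIntegrand
  · exact mem_slitPlane_iff.2 (Or.inr hw.ne')
  · exact mem_slitPlane_iff.2 (Or.inr (by simpa using hw.ne'))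

lemma tendsto_kummerIntegrand_vertical {x : ℝ} (hx : x ∈ Ioo 0 1) :
    Tendsto (fun y : ℝ => kummerIntegrand u v z (x + y * I)) (𝓝[>] 0)
      (𝓝 (kummerIntegrand u v z x)) := by
  have hcont : ContinuousAt (kummerIntegrand u v z) x := by
    refine (differentiableAt_kummerIntegrand ?_ ?_).continuousAt
    · exact ofReal_mem_slitPlane.2 hx.1
    · exact_mod_cast ofReal_mem_slitPlane.2 (sub_pos.2 hx.2)
  have hpath : Tendsto (fun y : ℝ => (x + y * I : ℂ)) (𝓝[>] 0) (𝓝 x) := by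
    refine Tendsto.mono_left ?_ nhdsWithin_le_nhds
    exact Continuous.tendsto' (by fun_prop) 0 _ (by simp)
  exact hcont.tendsto.comp hpath

lemma norm_cpow_le_of_le_norm_of_norm_le {r R : ℝ} (hr : 0 < r) (hrz : r ≤ ‖z‖) (hzR : ‖z‖ ≤ R)
    (w : ℂ) :
    ‖z ^ w‖ ≤ Real.exp (Real.pi * |w.im|) * R ^ max w.re 0 * r ^ min w.re 0 := by
  have hz : 0 < ‖z‖ := hr.trans_le hrz
  have hR : 0 < R := hz.trans_le hzR
  have harg : -(arg z * w.im) ≤ Real.pi * |w.im| := by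
    refine (neg_le_abs _).trans ?_
    rw [abs_mul]
    gcongr
    exact abs_arg_le_pi z
  calc ‖z ^ w‖ ≤ Real.exp (-(arg z * w.im)) * ‖z‖ ^ w.re := by
        rw [Real.exp_neg, ← div_eq_inv_mul]
        exact norm_cpow_le z w
    _ = Real.exp (-(arg z * w.im)) * ‖z‖ ^ max w.re 0 * ‖z‖ ^ min w.re 0 := by
        rw [mul_assoc, ← Real.rpow_add hz, max_add_min, add_zero]
    _ ≤ Real.exp (Real.pi * |w.im|) * R ^ max w.re 0 * r ^ min w.re 0 := by
        gcongr ?_ * ?_ * ?_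
        · exact Real.exp_le_exp.2 harg
        · exact Real.rpow_le_rpow hz.le hzR (le_max_right _ _)
        · exact Real.rpow_le_rpow_of_nonpos hr hrz (min_le_right _ _)

lemma intervalIntegrable_rpow_mul_one_sub_rpow {p q : ℝ} (hp : -1 < p) (hq : -1 < q) :
    IntervalIntegrable (fun x : ℝ => x ^ p * (1 - x) ^ q) volume 0 1 := by
  have hbeta := (betaIntegral_convergent (u := p + 1) (v := q + 1)
    (by simpa using neg_lt_iff_pos_add.1 hp) (by simpa using neg_lt_iff_pos_add.1 hq)).norm
  refine hbeta.congr_uIoo fun x hx => ?_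
  rw [uIoo_of_le zero_le_one] at hx
  simp only [add_sub_cancel_right, norm_mul, norm_cpow_real, norm_real, ← ofReal_one,
    ← ofReal_sub, Real.norm_of_nonneg hx.1.le, Real.norm_of_nonneg (sub_pos.2 hx.2).le]

/-- An integrable majorant of `y ↦ kummerIntegrand u v (I * s) (x + y * I)`, uniform in `s ≥ 0` and
`y ∈ (0, 1]`. Splitting each exponent into its positive and negative part leaves singularities only
at `x = 0` and `x = 1`. -/
noncomputable def kummerMajorant (u v : ℂ) (x : ℝ) : ℝ :=
  Real.exp (Real.pi * |(u - 1).im|) * 2 ^ max (u - 1).re 0 * x ^ min (u - 1).re 0 *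
    (Real.exp (Real.pi * |(v - 1).im|) * 2 ^ max (v - 1).re 0 * (1 - x) ^ min (v - 1).re 0)

lemma intervalIntegrable_kummerMajorant (hu : 0 < u.re) (hv : 0 < v.re) :
    IntervalIntegrable (kummerMajorant u v) volume 0 1 := by
  have hexp {w : ℂ} (hw : 0 < w.re) : -1 < min (w - 1).re 0 := by
    simpa [sub_re, one_re] using hw
  convert (intervalIntegrable_rpow_mul_one_sub_rpow (hexp hu) (hexp hv)).const_mul
    (Real.exp (Real.pi * |(u - 1).im|) * 2 ^ max (u - 1).re 0 *
      (Real.exp (Real.pi * |(v - 1).im|) * 2 ^ max (v - 1).re 0)) using 2 with x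
  rw [kummerMajorant]
  ring

lemma norm_exp_I_mul_mul (s : ℝ) (w : ℂ) : ‖exp (I * s * w)‖ = Real.exp (-(s * w.im)) := by
  rw [norm_exp]
  simp

lemma norm_kummerIntegrand_le (hs : 0 ≤ s) {x y : ℝ} (hx : x ∈ Ioo 0 1) (hy : y ∈ Ioc 0 1) :
    ‖kummerIntegrand u v (I * s) (x + y * I)‖ ≤ kummerMajorant u v x := by
  have hexp : ‖exp (I * s * (x + y * I))‖ ≤ 1 := by
    rw [norm_exp_I_mul_mul]
    simpa using mul_nonneg hs hy.1.le
  have hupper {a c : ℝ} (ha : |a| ≤ 1) (hc : |c| ≤ 1) : ‖(a + c * I : ℂ)‖ ≤ 2 := by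
    refine (norm_le_abs_re_add_abs_im _).trans ?_
    simpa using (add_le_add ha hc).trans_eq one_add_one_eq_two
  have hlower (a c : ℝ) : a ≤ ‖(a + c * I : ℂ)‖ := by
    simpa using re_le_norm (a + c * I)
  have hsub : (1 - (x + y * I) : ℂ) = (1 - x : ℝ) + (-y : ℝ) * I := by
    push_cast
    ring
  have habs : |y| ≤ 1 := abs_le.2 ⟨by linarith [hy.1], hy.2⟩
  have hleft := norm_cpow_le_of_le_norm_of_norm_le hx.1 (hlower x y)
    (hupper (abs_le.2 ⟨by linarith [hx.1], hx.2.le⟩) habs) (u - 1)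
  have hright := norm_cpow_le_of_le_norm_of_norm_le (sub_pos.2 hx.2) (hlower (1 - x) (-y))
    (hupper (abs_le.2 ⟨by linarith [hx.2], by linarith [hx.1]⟩) (by rwa [abs_neg])) (v - 1)
  rw [← hsub] at hright
  rw [kummerIntegrand, norm_mul, norm_mul, kummerMajorant]
  refine (mul_le_of_le_one_left (by positivity) hexp).trans ?_
  exact mul_le_mul hleft hright (norm_nonneg _) ((norm_nonneg _).trans hleft)

lemma ofReal_mul_cpow {r : ℝ} (hr : 0 < r) (z w : ℂ) :
    ((r : ℂ) * z) ^ w = (r : ℂ) ^ w * z ^ w := by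
  rcases eq_or_ne z 0 with rfl | hz
  · rcases eq_or_ne w 0 with rfl | hw <;> simp [*]
  · have hr' : (r : ℂ) ≠ 0 := ofReal_ne_zero.2 hr.ne'
    rw [cpow_def_of_ne_zero (mul_ne_zero hr' hz), cpow_def_of_ne_zero hr',
      cpow_def_of_ne_zero hz, log_ofReal_mul hr hz, ofReal_log hr.le, add_mul, exp_add]

lemma exp_I_mul_mul_mul_I (s y : ℝ) : exp (I * s * (y * I)) = Real.exp (-(s * y)) := by
  push_cast
  congr 1
  linear_combination (s * y : ℂ) * I_sq

lemma kummerIntegrand_mul_I {y : ℝ} (hy : 0 < y) :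
    kummerIntegrand u v (I * s) (y * I) =
      I ^ (u - 1) * ((y : ℂ) ^ (u - 1) * (Real.exp (-(s * y)) * (1 - I * y) ^ (v - 1))) := by
  rw [kummerIntegrand, exp_I_mul_mul_mul_I, ofReal_mul_cpow hy, mul_comm (y : ℂ) I]
  ring

lemma kummerIntegrand_one_add_mul_I {y : ℝ} (hy : 0 < y) :
    kummerIntegrand u v (I * s) (1 + y * I) = exp (I * s) * (-I) ^ (v - 1) *
      ((y : ℂ) ^ (v - 1) * (Real.exp (-(s * y)) * (1 - -I * y) ^ (u - 1))) := by
  have hbase : (1 : ℂ) - (1 + y * I) = y * -I := by ring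
  have hbase' : (1 : ℂ) + y * I = 1 - -I * y := by ring
  rw [kummerIntegrand, hbase, ofReal_mul_cpow hy, mul_add, exp_add, mul_one,
    exp_I_mul_mul_mul_I, hbase']
  ring

lemma continuous_one_sub_mul_cpow {c : ℂ} (hc : c.re = 0) (w : ℂ) :
    Continuous fun y : ℝ => (1 - c * y) ^ w := by
  refine Continuous.cpow (by fun_prop) continuous_const fun y => mem_slitPlane_iff.2 (Or.inl ?_)
  simp [hc]

lemma intervalIntegrable_kummerEdge (hu : 0 < u.re) {c : ℂ} (hc : c.re = 0) :
    IntervalIntegrable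
      (fun y : ℝ => (y : ℂ) ^ (u - 1) * (Real.exp (-(s * y)) * (1 - c * y) ^ (v - 1)))
      volume 0 1 := by
  have hcont := continuous_one_sub_mul_cpow hc (v - 1)
  refine (intervalIntegral.intervalIntegrable_cpow' ?_).mul_continuousOn (by fun_prop)
  simpa using hu

theorem kummerIntegral_I_mul_eq (hu : 0 < u.re) (hv : 0 < v.re) (hs : 0 ≤ s) :
    kummerIntegral u v (I * s) = (∫ x : ℝ in 0..1, kummerIntegrand u v (I * s) (x + I)) +
      I ^ u * kummerEdgeIntegral u v I s +
      exp (I * s) * (-I) ^ v * kummerEdgeIntegral v u (-I) s := by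
  have hedge {F G : ℝ → ℂ} (h : ∀ y, 0 < y → F y = G y) : EqOn G F (uIoo 0 1) := fun y hy => by
    rw [uIoo_of_le zero_le_one] at hy
    exact (h y hy.1).symm
  have hleft := hedge fun y => kummerIntegrand_mul_I (u := u) (v := v) (s := s) (y := y)
  have hright := hedge fun y => kummerIntegrand_one_add_mul_I (u := u) (v := v) (s := s) (y := y)
  have hcauchy := integral_boundary_rect_eq_zero_of_dominated_bottom
    (f := kummerIntegrand u v (I * s)) zero_le_one one_pos
    (fun w hw =>
      (differentiableAt_kummerIntegrand_of_im_pos hw.2.1).continuousAt.continuousWithinAt)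
    (fun w hw => (differentiableAt_kummerIntegrand_of_im_pos hw.2.1).differentiableWithinAt)
    (by simpa using ((intervalIntegrable_kummerEdge hu I_re).const_mul _).congr_uIoo hleft)
    (by simpa using ((intervalIntegrable_kummerEdge hv (by simp)).const_mul _).congr_uIoo hright)
    (intervalIntegrable_kummerMajorant hu hv)
    (fun x hx y hy => norm_kummerIntegrand_le hs hx hy)
    (fun x hx => tendsto_kummerIntegrand_vertical hx)
  simp only [ofReal_zero, zero_add, ofReal_one, one_mul, smul_eq_mul] at hcauchy
  rw [← intervalIntegral.integral_congr_uIoo hleft, ← intervalIntegral.integral_congr_uIoo hright,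
    intervalIntegral.integral_const_mul, intervalIntegral.integral_const_mul] at hcauchy
  have hcpow {c : ℂ} (hc : c ≠ 0) (w : ℂ) : c ^ w = c * c ^ (w - 1) := by
    rw [cpow_sub _ _ hc, cpow_one, mul_div_cancel₀ _ hc]
  rw [hcpow I_ne_zero u, hcpow (neg_ne_zero.2 I_ne_zero) v]
  unfold kummerIntegral kummerEdgeIntegral
  linear_combination hcauchy

lemma tendsto_cpow_mul_kummerEdgeIntegral (hu : 0 < u.re) {c : ℂ} (hc : c.re = 0) (v : ℂ) :
    Tendsto (fun s : ℝ => (s : ℂ) ^ u * kummerEdgeIntegral u v c s) atTop (𝓝 (Gamma u)) := by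
  simpa [kummerEdgeIntegral] using tendsto_cpow_smul_integral_cpow_smul_exp_neg_mul_smul hu one_pos
    (continuous_one_sub_mul_cpow hc (v - 1)).continuousOn

lemma tendsto_cpow_mul_kummerEdgeIntegral_zero (huv : u.re < v.re) (hv : 0 < v.re) {c : ℂ}
    (hc : c.re = 0) :
    Tendsto (fun s : ℝ => (s : ℂ) ^ u * kummerEdgeIntegral v u c s) atTop (𝓝 0) := by
  have hdecay : Tendsto (fun s : ℝ => (s : ℂ) ^ (u - v)) atTop (𝓝 0) := by
    rw [tendsto_zero_iff_norm_tendsto_zero]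
    refine (tendsto_rpow_neg_atTop (sub_pos.2 huv)).congr' ?_
    filter_upwards [eventually_gt_atTop 0] with s hs
    rw [norm_cpow_eq_rpow_re_of_pos hs, sub_re, neg_sub]
  have hprod := hdecay.mul (tendsto_cpow_mul_kummerEdgeIntegral hv hc u)
  rw [zero_mul] at hprod
  refine hprod.congr' ?_
  filter_upwards [eventually_gt_atTop 0] with s hs
  rw [← mul_assoc, ← cpow_add _ _ (ofReal_ne_zero.2 hs.ne'), sub_add_cancel]

lemma norm_integral_kummerIntegrand_top_le (u v : ℂ) (s : ℝ) :
    ‖∫ x : ℝ in 0..1, kummerIntegrand u v (I * s) (x + I)‖ ≤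
      Real.exp (-s) * ∫ x : ℝ in 0..1, ‖kummerIntegrand u v 0 (x + I)‖ := by
  refine (intervalIntegral.norm_integral_le_integral_norm zero_le_one).trans_eq ?_
  rw [← intervalIntegral.integral_const_mul]
  congr 1 with x
  rw [kummerIntegrand, norm_mul, norm_exp_I_mul_mul, kummerIntegrand]
  simp

lemma tendsto_cpow_mul_integral_kummerIntegrand_top (u v : ℂ) :
    Tendsto (fun s : ℝ => (s : ℂ) ^ u * ∫ x : ℝ in 0..1, kummerIntegrand u v (I * s) (x + I))
      atTop (𝓝 0) := by
  set M := ∫ x : ℝ in 0..1, ‖kummerIntegrand u v 0 (x + I)‖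
  have hdecay : Tendsto (fun s : ℝ => s ^ u.re * Real.exp (-s) * M) atTop (𝓝 0) := by
    simpa using (tendsto_rpow_mul_exp_neg_mul_atTop_nhds_zero u.re 1 one_pos).mul_const M
  refine squeeze_zero_norm' ?_ hdecay
  filter_upwards [eventually_gt_atTop 0] with s hs
  rw [norm_mul, norm_cpow_eq_rpow_re_of_pos hs, mul_assoc]
  gcongr
  exact norm_integral_kummerIntegrand_top_le u v s

theorem tendsto_cpow_mul_kummerIntegral_I_mul (hu : 0 < u.re) (huv : u.re < v.re) :
    Tendsto (fun s : ℝ => (s : ℂ) ^ u * kummerIntegral u v (I * s)) atTop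
      (𝓝 (I ^ u * Gamma u)) := by
  have hv := hu.trans huv
  have htop := tendsto_cpow_mul_integral_kummerIntegrand_top u v
  have hleft := (tendsto_cpow_mul_kummerEdgeIntegral hu I_re v).const_mul (I ^ u)
  have hright : Tendsto (fun s : ℝ =>
      exp (I * s) * ((-I) ^ v * ((s : ℂ) ^ u * kummerEdgeIntegral v u (-I) s))) atTop (𝓝 0) := by
    have hlim :=
      (tendsto_cpow_mul_kummerEdgeIntegral_zero huv hv (c := -I) (by simp)).const_mul ((-I) ^ v)
    rw [mul_zero] at hlim
    refine squeeze_zero_norm (fun s => ?_) (tendsto_zero_iff_norm_tendsto_zero.1 hlim)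
    rw [norm_mul, mul_comm I, norm_exp_ofReal_mul_I, one_mul]
  have htotal := (htop.add hleft).add hright
  rw [zero_add, add_zero] at htotal
  refine htotal.congr' ?_
  filter_upwards [eventually_ge_atTop 0] with s hs
  rw [kummerIntegral_I_mul_eq hu hv hs]
  ring

end KummerIntegral

section DunklKernel

open Complex Topology Interval

variable {k : ℝ}

lemma Dk_conj (k : ℝ) (u : ℂ) : Dk k (starRingEnd ℂ u) = starRingEnd ℂ (Dk k u) := by
  rw [Dk, Dk, map_mul, conj_ofReal, ← integral_conj]
  simp only [map_mul, conj_ofReal, ← exp_conj]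

lemma exp_mul_integral_eq_kummerIntegral (k : ℝ) (z : ℂ) :
    (exp z * ∫ t : ℝ in -1..1, exp (t * -z) * ((1 - t) ^ (k - 1) * (1 + t) ^ k : ℝ)) =
      (2 ^ (2 * k) : ℝ) * kummerIntegral k (k + 1) (2 * z) := by
  have hsubst := intervalIntegral.smul_integral_comp_sub_mul (a := 0) (b := 1)
    (fun t : ℝ => exp (t * -z) * ((1 - t) ^ (k - 1) * (1 + t) ^ k : ℝ)) 2 1
  have hbounds : (1 - 2 * 1 : ℝ) = -1 ∧ (1 - 2 * 0 : ℝ) = 1 := by norm_num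
  rw [hbounds.1, hbounds.2] at hsubst
  rw [← hsubst, kummerIntegral, real_smul, ← mul_assoc,
    ← intervalIntegral.integral_const_mul, ← intervalIntegral.integral_const_mul]
  refine intervalIntegral.integral_congr_uIoo fun x hx => ?_
  rw [uIoo_of_le zero_le_one] at hx
  have hpow : (1 - (1 - 2 * x)) ^ (k - 1) * (1 + (1 - 2 * x)) ^ k =
      2 ^ (2 * k - 1) * (x ^ (k - 1) * (1 - x) ^ k) := by
    rw [show 1 - (1 - 2 * x) = 2 * x by ring, show 1 + (1 - 2 * x) = 2 * (1 - x) by ring,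
      Real.mul_rpow two_pos.le hx.1.le, Real.mul_rpow two_pos.le (sub_pos.2 hx.2).le,
      show 2 * k - 1 = (k - 1) + k by ring, Real.rpow_add two_pos]
    ring
  have hexp : exp (2 * z * x) = exp z * exp ((1 - 2 * x : ℝ) * -z) := by
    rw [← exp_add]
    push_cast
    ring_nf
  have hcpow : ((x ^ (k - 1) * (1 - x) ^ k : ℝ) : ℂ) =
      (x : ℂ) ^ (k - 1 : ℂ) * (1 - x : ℂ) ^ (k + 1 - 1 : ℂ) := by
    rw [ofReal_mul, ofReal_cpow hx.1.le, ofReal_cpow (sub_pos.2 hx.2).le, add_sub_cancel_right]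
    push_cast
    rfl
  have htwo : (2 : ℝ) ^ (2 * k) = 2 * 2 ^ (2 * k - 1) := by
    rw [Real.rpow_sub_one two_ne_zero, mul_div_cancel₀ _ two_ne_zero]
  simp only [kummerIntegrand]
  rw [hpow, hexp, ofReal_mul, hcpow, htwo, ofReal_mul, ofReal_ofNat]
  ring

theorem exp_mul_Dk_neg (k : ℝ) (z : ℂ) :
    exp z * Dk k (-z) = (Real.Gamma (k + 1/2) / (Real.Gamma (1/2) * Real.Gamma k) : ℝ) *
      ((2 ^ (2 * k) : ℝ) * kummerIntegral k (k + 1) (2 * z)) := by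
  rw [← exp_mul_integral_eq_kummerIntegral, Dk, integral_Icc_eq_integral_Ioc,
    ← intervalIntegral.integral_of_le (by norm_num), mul_left_comm]

lemma gamma_ratio_mul_two_rpow_mul_gamma (hk : 0 < k) :
    Real.Gamma (k + 1/2) / (Real.Gamma (1/2) * Real.Gamma k) * (2 ^ k * Real.Gamma k) =
      Real.Gamma (2 * k + 1) / (2 ^ k * Real.Gamma (k + 1)) := by
  have hdup : Real.Gamma (k + 1/2) * Real.Gamma (k + 1) =
      Real.Gamma (2 * k + 1) / (2 ^ k * 2 ^ k) * √Real.pi := by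
    convert Real.Gamma_mul_Gamma_add_half (k + 1/2) using 2
    · ring_nf
    · rw [← Real.rpow_add two_pos, div_eq_mul_inv, ← Real.rpow_neg two_pos.le]
      ring_nf
  have hΓ : Real.Gamma k ≠ 0 := (Real.Gamma_pos_of_pos hk).ne'
  have hΓ' : Real.Gamma (k + 1) ≠ 0 := (Real.Gamma_pos_of_pos (by positivity)).ne'
  rw [Real.Gamma_one_half_eq, eq_div_iff (mul_ne_zero (by positivity) hΓ')]
  field_simp at hdup ⊢
  linear_combination hdup

lemma I_cpow (w : ℂ) : I ^ w = exp (I * Real.pi * w / 2) := by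
  rw [cpow_def_of_ne_zero I_ne_zero, log_I]
  ring_nf

theorem tendsto_rpow_mul_exp_mul_Dk_neg (hk : 0 < k) :
    Tendsto (fun s : ℝ => ((s ^ k : ℝ) : ℂ) * exp (I * s) * Dk k (-(I * s))) atTop
      (𝓝 (exp (I * Real.pi * k / 2) *
        (Real.Gamma (2 * k + 1) / (2 ^ k * Real.Gamma (k + 1)) : ℝ))) := by
  set c := Real.Gamma (k + 1/2) / (Real.Gamma (1/2) * Real.Gamma k) with hc
  have hkummer : Tendsto (fun s : ℝ => ((c * 2 ^ k : ℝ) : ℂ) *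
      (((2 * s : ℝ) : ℂ) ^ (k : ℂ) * kummerIntegral k (k + 1) (I * (2 * s : ℝ)))) atTop
      (𝓝 ((c * 2 ^ k : ℝ) * (I ^ (k : ℂ) * Gamma k))) :=
    ((tendsto_cpow_mul_kummerIntegral_I_mul (u := k) (v := k + 1) (by simpa using hk)
      (by simp)).comp (tendsto_id.const_mul_atTop two_pos)).const_mul _
  rw [← gamma_ratio_mul_two_rpow_mul_gamma hk, ← hc, ← I_cpow]
  convert hkummer.congr' ?_ using 2
  · rw [Gamma_ofReal]
    push_cast
    ring
  filter_upwards [eventually_ge_atTop 0] with s hs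
  rw [mul_assoc, exp_mul_Dk_neg, ← hc, ← ofReal_cpow (by positivity),
    Real.mul_rpow two_pos.le hs, two_mul k, Real.rpow_add two_pos]
  push_cast
  ring_nf

end DunklKernel

/-- Asymptotics of the rank-one Dunkl kernel along the imaginary axis:
`s^k e^{∓is} D_k(±is) → e^{∓iπk/2} Γ(2k+1)/(2^k Γ(k+1))` as `s → +∞`. -/
theorem dunkl_stmt11 (k : ℝ) (hk : 0 < k) :
    Tendsto (fun s : ℝ => ((s ^ k : ℝ) : ℂ) * Complex.exp (-(Complex.I * (s : ℂ))) *
        Dk k (Complex.I * (s : ℂ)))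
      atTop (nhds (Complex.exp (-(Complex.I * (Real.pi : ℂ) * (k : ℂ)) / 2) *
        ((Real.Gamma (2 * k + 1) / (2 ^ k * Real.Gamma (k + 1)) : ℝ) : ℂ))) ∧
    Tendsto (fun s : ℝ => ((s ^ k : ℝ) : ℂ) * Complex.exp (Complex.I * (s : ℂ)) *
        Dk k (-(Complex.I * (s : ℂ))))
      atTop (nhds (Complex.exp (Complex.I * (Real.pi : ℂ) * (k : ℂ) / 2) *
        ((Real.Gamma (2 * k + 1) / (2 ^ k * Real.Gamma (k + 1)) : ℝ) : ℂ))) := by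
  refine ⟨?_, tendsto_rpow_mul_exp_mul_Dk_neg hk⟩
  convert (Complex.continuous_conj.tendsto _).comp (tendsto_rpow_mul_exp_mul_Dk_neg hk) using 2
  · simp only [Function.comp_apply, map_mul, Complex.conj_ofReal, ← Complex.exp_conj, ← Dk_conj,
      Complex.conj_I, map_neg, neg_mul, neg_neg]
  · simp only [map_mul, map_div₀, Complex.conj_ofReal, ← Complex.exp_conj, Complex.conj_I,
      neg_mul, map_ofNat]
end

section
/- Let k > 0 be real and x, y > 0. Then z^k e^{−zxy} D_k(zxy) tends to Γ(2k+1)/(2^k Γ(k+1) (xy)^k) as z → ∞ with z in the closed right half plane H = {z ∈ ℂ : Re z ≥ 0}, z ≠ 0; here z^k denotes the holomorphic branch of the power function on ℂ minus the non-positive reals with 1^k = 1. -/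
open MeasureTheory Filter Set

/-!
After the substitution `t = 1 - 2s`, `e^{-u} D_k(u)` is the Laplace transform at `2u` of the Beta
density `s^(a-1) (1-s)^(b-1)` with `a = k` and `b = k + 1`. Its limit on the closed half plane is
reached in real variables, without moving contours:

* For `a < 1` and `b = 1`, the rotated Gamma integral (identity theorem) leaves only the tail
  `∫_1^∞`, and one integration by parts against the decreasing factor `t^(a-1)` bounds it by
  `2/|u|`, uniformly up to the imaginary axis.
* For `a < 1` and `b > 1`, the transform is an average over `r ∈ [0, 1]` of the previous one at
  `ru`, so dominated convergence applies.
* A contiguous relation, again an integration by parts, raises `(a, b)` to `(a + 1, b + 1)`; at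
  `a = 1` it starts from an elementary computation.
-/

open scoped Complex Interval Topology

lemma ofReal_mul_cpow_ofReal {r : ℝ} (hr : 0 < r) {u : ℂ} (hu : u ≠ 0) (a : ℝ) :
    (r * u) ^ (a : ℂ) = ((r ^ a : ℝ) : ℂ) * u ^ (a : ℂ) := by
  have hr₀ : (r : ℂ) ≠ 0 := by exact_mod_cast hr.ne'
  rw [Complex.ofReal_cpow hr.le, Complex.cpow_def_of_ne_zero (mul_ne_zero hr₀ hu),
    Complex.cpow_def_of_ne_zero hr₀, Complex.cpow_def_of_ne_zero hu, Complex.log_ofReal_mul hr hu,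
    ← Complex.exp_add, ← Complex.ofReal_log hr.le, add_mul]

lemma norm_cexp_neg_mul_le_one {u : ℂ} (hu : 0 ≤ u.re) {t : ℝ} (ht : 0 ≤ t) :
    ‖cexp (-(u * t))‖ ≤ 1 := by
  rw [Complex.norm_exp, Real.exp_le_one_iff, Complex.neg_re, Complex.re_mul_ofReal]
  exact neg_nonpos.2 (mul_nonneg hu ht)

lemma continuous_one_sub_rpow {c : ℝ} (hc : 0 ≤ c) : Continuous fun s : ℝ => (1 - s) ^ c :=
  (Real.continuous_rpow_const hc).comp (continuous_sub_left 1)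

lemma hasDerivAt_one_sub_rpow (c : ℝ) {s : ℝ} (hs : s < 1) :
    HasDerivAt (fun s : ℝ => (1 - s) ^ c) (-c * (1 - s) ^ (c - 1)) s :=
  (((hasDerivAt_id s).const_sub 1).rpow_const (Or.inl (sub_pos.2 hs).ne')).congr_deriv (by simp)

lemma integral_one_sub_rpow {c : ℝ} (hc : 0 < c) :
    ∫ s in (0 : ℝ)..1, (1 - s) ^ (c - 1) = 1 / c := by
  rw [intervalIntegral.integral_comp_sub_left (fun x => x ^ (c - 1)) 1,
    integral_rpow (Or.inl (by linarith))]
  simp [hc.ne']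

lemma mul_integral_cexp_neg_mul (u : ℂ) {f f' : ℝ → ℂ} {p q : ℝ} (hf : ContinuousOn f [[p, q]])
    (hff' : ∀ t ∈ Ioo (min p q) (max p q), HasDerivAt f (f' t) t)
    (hf' : IntervalIntegrable f' volume p q) :
    u * ∫ t in p..q, cexp (-(u * t)) * f t =
      cexp (-(u * p)) * f p - cexp (-(u * q)) * f q + ∫ t in p..q, cexp (-(u * t)) * f' t := by
  have hexp (t : ℝ) : HasDerivAt (fun t : ℝ => cexp (-(u * t))) (-u * cexp (-(u * t))) t := by
    simpa [mul_comm] using ((hasDerivAt_id t).ofReal_comp.const_mul u).neg.cexp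
  have hparts := intervalIntegral.integral_mul_deriv_eq_deriv_mul_of_hasDerivAt
    (by fun_prop) hf (fun t _ => hexp t) hff'
    (Continuous.intervalIntegrable (by fun_prop) p q) hf'
  simp only [mul_assoc, intervalIntegral.integral_const_mul] at hparts
  linear_combination -hparts

lemma mul_integral_cexp_neg_mul_ofReal (u : ℂ) {f f' : ℝ → ℝ} {p q : ℝ}
    (hf : ContinuousOn f [[p, q]])
    (hff' : ∀ t ∈ Ioo (min p q) (max p q), HasDerivAt f (f' t) t)
    (hf' : IntervalIntegrable f' volume p q) :
    u * ∫ t in p..q, cexp (-(u * t)) * f t =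
      cexp (-(u * p)) * f p - cexp (-(u * q)) * f q + ∫ t in p..q, cexp (-(u * t)) * f' t :=
  mul_integral_cexp_neg_mul u (Complex.continuous_ofReal.comp_continuousOn hf)
    (fun t ht => (hff' t ht).ofReal_comp) ⟨hf'.1.ofReal, hf'.2.ofReal⟩

lemma norm_mul_integral_cexp_neg_mul_le {u : ℂ} (hu : 0 ≤ u.re) {f f' : ℝ → ℝ} {p q : ℝ}
    (hp : 0 ≤ p) (hpq : p ≤ q) (hf : ContinuousOn f (Icc p q))
    (hff' : ∀ t ∈ Ioo p q, HasDerivAt f (f' t) t) (hf' : ∀ t ∈ Ioo p q, f' t ≤ 0)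
    (hq : 0 ≤ f q) :
    ‖u * ∫ t in p..q, cexp (-(u * t)) * f t‖ ≤ 2 * f p := by
  have hint : IntervalIntegrable f' volume p q := by
    have := intervalIntegral.intervalIntegrable_deriv_of_nonneg (g := -f) (g' := -f')
      (a := p) (b := q) (by simpa [uIcc_of_le hpq] using hf.neg)
      (by simpa [hpq] using fun t h₁ h₂ => (hff' t ⟨h₁, h₂⟩).neg)
      (by simpa [hpq] using fun t h₁ h₂ => hf' t ⟨h₁, h₂⟩)
    simpa using this.neg
  have hftc : ∫ t in p..q, -f' t = f p - f q := by
    rw [intervalIntegral.integral_neg,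
      intervalIntegral.integral_eq_sub_of_hasDerivAt_of_le hpq hf hff' hint, neg_sub]
  have hbound : ‖∫ t in p..q, cexp (-(u * t)) * (f' t : ℂ)‖ ≤ f p - f q := by
    rw [← hftc]
    refine intervalIntegral.norm_integral_le_of_norm_le hpq ?_ hint.neg
    filter_upwards [Measure.ae_ne volume q] with t htq ht
    have ht' := hf' t ⟨ht.1, ht.2.lt_of_ne htq⟩
    rw [norm_mul, Complex.norm_real, Real.norm_of_nonpos ht']
    exact mul_le_of_le_one_left (neg_nonneg.2 ht')
      (norm_cexp_neg_mul_le_one hu (hp.trans ht.1.le))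
  rw [mul_integral_cexp_neg_mul_ofReal u (by rwa [uIcc_of_le hpq])
    (by simpa only [min_eq_left hpq, max_eq_right hpq] using hff') hint]
  have hfp : 0 ≤ f p := hq.trans (by linarith [(norm_nonneg _).trans hbound])
  have hend (t : ℝ) (ht : 0 ≤ t) (hft : 0 ≤ f t) : ‖cexp (-(u * t)) * (f t : ℂ)‖ ≤ f t := by
    rw [norm_mul, Complex.norm_real, Real.norm_of_nonneg hft]
    exact mul_le_of_le_one_left hft (norm_cexp_neg_mul_le_one hu ht)
  calc _ ≤ f p + f q + (f p - f q) :=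
        norm_add_le_of_le (norm_sub_le_of_le (hend p hp hfp) (hend q (hp.trans hpq) hq)) hbound
    _ = 2 * f p := by ring

section LaplaceBeta

variable {a b c : ℝ}

lemma intervalIntegrable_rpow_mul_one_sub_rpow_s12 (ha : 0 < a) (hb : 0 < b) :
    IntervalIntegrable (fun s : ℝ => s ^ (a - 1) * (1 - s) ^ (b - 1)) volume 0 1 := by
  have hconv := (Complex.betaIntegral_convergent (u := a) (v := b) (by simpa) (by simpa)).norm
  refine hconv.congr_uIoo fun s hs => ?_
  rw [uIoo_of_le zero_le_one] at hs
  have hs' : (1 - s : ℂ) = ((1 - s : ℝ) : ℂ) := by push_cast; rfl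
  simp only [norm_mul]
  rw [hs', Complex.norm_cpow_eq_rpow_re_of_pos hs.1,
    Complex.norm_cpow_eq_rpow_re_of_pos (sub_pos.2 hs.2)]
  simp

lemma intervalIntegrable_one_sub_rpow (hc : 0 < c) :
    IntervalIntegrable (fun s : ℝ => (1 - s) ^ (c - 1)) volume 0 1 := by
  simpa using intervalIntegrable_rpow_mul_one_sub_rpow_s12 one_pos hc

lemma integral_mul_one_sub_rpow {g : ℝ → ℂ} (hg : IntervalIntegrable g volume 0 1)
    (hgcont : ContinuousOn g (Ioo 0 1)) (hc : 0 < c) :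
    ∫ s in (0 : ℝ)..1, g s * (((1 - s) ^ c : ℝ) : ℂ) =
      c * ∫ s in (0 : ℝ)..1, (((1 - s) ^ (c - 1) : ℝ) : ℂ) * ∫ t in (0 : ℝ)..s, g t := by
  have hprim : ∀ s ∈ Ioo (0 : ℝ) 1, HasDerivAt (fun s => ∫ t in (0 : ℝ)..s, g t) (g s) s :=
    fun s hs => intervalIntegral.integral_hasDerivAt_right
      (hg.mono_set (uIcc_subset_uIcc_left (by simp [hs.1.le, hs.2.le])))
      (hgcont.stronglyMeasurableAtFilter isOpen_Ioo s hs)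
      (hgcont.continuousAt (isOpen_Ioo.mem_nhds hs))
  have hweight : ∀ s ∈ Ioo (0 : ℝ) 1, HasDerivAt (fun s : ℝ => (((1 - s) ^ c : ℝ) : ℂ))
      ((-c * (1 - s) ^ (c - 1) : ℝ) : ℂ) s :=
    fun s hs => (hasDerivAt_one_sub_rpow c hs.2).ofReal_comp
  have hweightInt := (intervalIntegrable_one_sub_rpow hc).const_mul (-c)
  have hweightCont : Continuous fun s : ℝ => (((1 - s) ^ c : ℝ) : ℂ) :=
    Complex.continuous_ofReal.comp (continuous_one_sub_rpow hc.le)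
  have hparts := intervalIntegral.integral_mul_deriv_eq_deriv_mul_of_hasDerivAt
    hweightCont.continuousOn (intervalIntegral.continuousOn_primitive_interval' hg left_mem_uIcc)
    (by simpa using hweight) (by simpa using hprim) ⟨hweightInt.1.ofReal, hweightInt.2.ofReal⟩ hg
  simpa [hc.ne', mul_comm, mul_assoc] using hparts

lemma integrableOn_rpow_mul_exp_neg_mul (ha : 0 < a) (hc : 0 < c) :
    IntegrableOn (fun t : ℝ => t ^ (a - 1) * Real.exp (-(c * t))) (Ioi 0) := by
  simpa using integrableOn_rpow_mul_exp_neg_mul_rpow (p := 1) (s := a - 1) (b := c)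
    (by linarith) one_pos hc

lemma integrableOn_cexp_neg_mul_rpow_Ioi (ha : 0 < a) {w : ℂ} (hw : 0 < w.re) :
    IntegrableOn (fun t : ℝ => cexp (-(w * t)) * ((t ^ (a - 1) : ℝ) : ℂ)) (Ioi 0) := by
  refine (integrableOn_rpow_mul_exp_neg_mul ha hw).mono' (by fun_prop) ?_
  filter_upwards [ae_restrict_mem measurableSet_Ioi] with t ht
  rw [norm_mul, Complex.norm_exp, Complex.norm_real,
    Real.norm_of_nonneg (Real.rpow_nonneg (le_of_lt ht) _), mul_comm]
  simp

lemma differentiableOn_integral_cexp_neg_mul_rpow (ha : 0 < a) :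
    DifferentiableOn ℂ (fun w : ℂ => ∫ t in Ioi (0 : ℝ), cexp (-(w * t)) * ((t ^ (a - 1) : ℝ) : ℂ))
      {w | 0 < w.re} := by
  let μ : Measure ℝ := (volume.restrict (Ioi 0)).withDensity fun t => ENNReal.ofReal (t ^ (a - 1))
  have hmeas : Measurable fun t : ℝ => ENNReal.ofReal (t ^ (a - 1)) := by fun_prop
  have hmgf : (fun w : ℂ => ∫ t in Ioi (0 : ℝ), cexp (-(w * t)) * ((t ^ (a - 1) : ℝ) : ℂ)) =
      ProbabilityTheory.complexMGF (fun t => -t) μ := by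
    ext w
    rw [ProbabilityTheory.complexMGF, integral_withDensity_eq_integral_toReal_smul hmeas (by simp)]
    refine setIntegral_congr_fun measurableSet_Ioi fun t ht => ?_
    simp [ENNReal.toReal_ofReal (Real.rpow_nonneg (le_of_lt ht) (a - 1)), mul_comm]
  have hexp : Ioi 0 ⊆ ProbabilityTheory.integrableExpSet (fun t => -t) μ := fun c hc => by
    rw [ProbabilityTheory.integrableExpSet, mem_ofPred,
      integrable_withDensity_iff_integrable_smul' hmeas (by simp)]
    refine (integrableOn_rpow_mul_exp_neg_mul ha hc).congr_fun (fun t ht => ?_) measurableSet_Ioi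
    simp [ENNReal.toReal_ofReal (Real.rpow_nonneg (le_of_lt ht) (a - 1))]
  rw [hmgf]
  exact ProbabilityTheory.differentiableOn_complexMGF.mono fun w hw =>
    interior_maximal hexp isOpen_Ioi hw

lemma integral_cexp_neg_mul_rpow_Ioi (ha : 0 < a) {w : ℂ} (hw : 0 < w.re) :
    ∫ t in Ioi (0 : ℝ), cexp (-(w * t)) * ((t ^ (a - 1) : ℝ) : ℂ) =
      w ^ (-a : ℂ) * Real.Gamma a := by
  have hopen : IsOpen {w : ℂ | 0 < w.re} := isOpen_lt continuous_const Complex.continuous_re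
  have hpow : DifferentiableOn ℂ (fun w : ℂ => w ^ (-a : ℂ) * Real.Gamma a) {w | 0 < w.re} :=
    fun w hw => ((differentiableAt_id.cpow_const (Or.inl hw)).mul_const _).differentiableWithinAt
  refine ((differentiableOn_integral_cexp_neg_mul_rpow ha).analyticOnNhd hopen)
    |>.eqOn_of_preconnected_of_frequently_eq (hpow.analyticOnNhd hopen)
      (convex_halfSpace_re_gt 0).isPreconnected (z₀ := 1) (by simp) ?_ hw
  have hreal (r : ℝ) (hr : 0 < r) : ∫ t in Ioi (0 : ℝ), cexp (-(r * t)) * ((t ^ (a - 1) : ℝ) : ℂ) =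
      (r : ℂ) ^ (-a : ℂ) * Real.Gamma a := by
    rw [← Complex.ofReal_neg, ← Complex.ofReal_cpow hr.le, ← Complex.ofReal_mul,
      Real.rpow_neg hr.le, ← Real.inv_rpow hr.le, ← one_div,
      ← Real.integral_rpow_mul_exp_neg_mul_Ioi ha hr, ← integral_complex_ofReal]
    simp [mul_comm]
  have hlim : Tendsto ((↑) : ℝ → ℂ) (𝓝[≠] 1) (𝓝[≠] 1) := by
    simpa using Complex.continuous_ofReal.continuousWithinAt.tendsto_nhdsWithin
      (s := {(1 : ℝ)}ᶜ) (t := {(1 : ℂ)}ᶜ) (x := 1) fun r hr => by simpa using hr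
  refine hlim.frequently (Eventually.frequently ?_)
  filter_upwards [nhdsWithin_le_nhds (Ioi_mem_nhds one_pos)] with r hr using hreal r hr

lemma norm_mul_integral_cexp_neg_mul_rpow_Ioi_le (ha : 0 < a) (ha₁ : a ≤ 1) {w : ℂ}
    (hw : 0 < w.re) :
    ‖w * ∫ t in Ioi (1 : ℝ), cexp (-(w * t)) * ((t ^ (a - 1) : ℝ) : ℂ)‖ ≤ 2 := by
  have hint := (integrableOn_cexp_neg_mul_rpow_Ioi ha hw).mono_set (Ioi_subset_Ioi zero_le_one)
  have hlim := ((intervalIntegral_tendsto_integral_Ioi 1 hint tendsto_id).const_mul w).norm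
  refine le_of_tendsto hlim ?_
  filter_upwards [eventually_ge_atTop 1] with q hq
  have hpos {t : ℝ} (ht : 1 ≤ t) : 0 < t := one_pos.trans_le ht
  have hbound := norm_mul_integral_cexp_neg_mul_le hw.le (f := fun t => t ^ (a - 1))
    zero_le_one hq
    (fun t ht => (Real.continuousAt_rpow_const _ _ (Or.inl (hpos ht.1).ne')).continuousWithinAt)
    (fun t ht => Real.hasDerivAt_rpow_const (Or.inl (hpos ht.1.le).ne'))
    (fun t ht => mul_nonpos_of_nonpos_of_nonneg (by linarith)
      (Real.rpow_nonneg (hpos ht.1.le).le _)) (Real.rpow_nonneg (hpos hq).le _)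
  simpa using hbound

/-- The Laplace transform, at `u`, of the Beta density `s ^ (a - 1) * (1 - s) ^ (b - 1)` on
`[0, 1]`: Euler's integral for Kummer's function `₁F₁(a; a + b; -u)`, up to the factor `B(a, b)`. -/
noncomputable def laplaceBeta (a b : ℝ) (u : ℂ) : ℂ :=
  ∫ s in (0 : ℝ)..1, cexp (-(u * s)) * ((s ^ (a - 1) * (1 - s) ^ (b - 1) : ℝ) : ℂ)

lemma intervalIntegrable_laplaceBeta (ha : 0 < a) (hb : 0 < b) (u : ℂ) :
    IntervalIntegrable (fun s : ℝ => cexp (-(u * s)) * ((s ^ (a - 1) * (1 - s) ^ (b - 1) : ℝ) : ℂ))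
      volume 0 1 := by
  have hbeta := intervalIntegrable_rpow_mul_one_sub_rpow_s12 ha hb
  exact IntervalIntegrable.continuousOn_mul ⟨hbeta.1.ofReal, hbeta.2.ofReal⟩ (by fun_prop)

lemma laplaceBeta_succ_left_add_succ_right (ha : 0 < a) (hb : 0 < b) (u : ℂ) :
    laplaceBeta (a + 1) b u + laplaceBeta a (b + 1) u = laplaceBeta a b u := by
  unfold laplaceBeta
  rw [← intervalIntegral.integral_add (intervalIntegrable_laplaceBeta (by positivity) hb u)
    (intervalIntegrable_laplaceBeta ha (by positivity) u)]
  refine intervalIntegral.integral_congr_Ioo_of_le zero_le_one fun s hs => ?_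
  simp only [add_sub_cancel_right, Real.rpow_sub_one hs.1.ne',
    Real.rpow_sub_one (sub_pos.2 hs.2).ne']
  have hs₀ : (s : ℂ) ≠ 0 := by exact_mod_cast hs.1.ne'
  have hs₁ : (1 - s : ℂ) ≠ 0 := by exact_mod_cast (sub_pos.2 hs.2).ne'
  push_cast
  field_simp
  ring

lemma mul_laplaceBeta_succ_succ (ha : 0 < a) (hb : 0 < b) (u : ℂ) :
    u * laplaceBeta (a + 1) (b + 1) u =
      (a + b) * laplaceBeta a (b + 1) u - b * laplaceBeta a b u := by
  have hderiv : ∀ s ∈ Ioo (0 : ℝ) 1, HasDerivAt (fun s : ℝ => s ^ a * (1 - s) ^ b)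
      (a * (s ^ (a - 1) * (1 - s) ^ b) - b * (s ^ a * (1 - s) ^ (b - 1))) s := by
    intro s hs
    have hleft := Real.hasDerivAt_rpow_const (p := a) (Or.inl hs.1.ne')
    exact (hleft.mul (hasDerivAt_one_sub_rpow b hs.2)).congr_deriv (by ring)
  have hint : IntervalIntegrable (fun s : ℝ =>
      a * (s ^ (a - 1) * (1 - s) ^ b) - b * (s ^ a * (1 - s) ^ (b - 1))) volume 0 1 := by
    simpa using
      ((intervalIntegrable_rpow_mul_one_sub_rpow_s12 ha (add_pos hb one_pos)).const_mul a).sub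
        ((intervalIntegrable_rpow_mul_one_sub_rpow_s12 (add_pos ha one_pos) hb).const_mul b)
  have hcont : Continuous fun s : ℝ => s ^ a * (1 - s) ^ b :=
    (Real.continuous_rpow_const ha.le).mul (continuous_one_sub_rpow hb.le)
  have hparts := mul_integral_cexp_neg_mul_ofReal u hcont.continuousOn (by simpa using hderiv) hint
  have hsplit : u * laplaceBeta (a + 1) (b + 1) u =
      a * laplaceBeta a (b + 1) u - b * laplaceBeta (a + 1) b u := by
    have hint₁ := intervalIntegrable_laplaceBeta ha (add_pos hb one_pos) u
    have hint₂ := intervalIntegrable_laplaceBeta (add_pos ha one_pos) hb u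
    unfold laplaceBeta
    rw [← intervalIntegral.integral_const_mul (a : ℂ),
      ← intervalIntegral.integral_const_mul (b : ℂ),
      ← intervalIntegral.integral_sub (hint₁.const_mul _) (hint₂.const_mul _)]
    simp only [add_sub_cancel_right, hparts, Real.zero_rpow ha.ne', sub_self, Real.zero_rpow hb.ne']
    simp only [zero_mul, mul_zero, Complex.ofReal_zero, sub_self, zero_add]
    congr! 2 with s
    push_cast
    ring
  linear_combination hsplit - b * laplaceBeta_succ_left_add_succ_right ha hb u

lemma mul_laplaceBeta_one_succ (hb : 0 < b) (u : ℂ) :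
    u * laplaceBeta 1 (b + 1) u = 1 - b * laplaceBeta 1 b u := by
  have hderiv : ∀ s ∈ Ioo (0 : ℝ) 1,
      HasDerivAt (fun s : ℝ => (1 - s) ^ b) (-b * (1 - s) ^ (b - 1)) s :=
    fun s hs => hasDerivAt_one_sub_rpow b hs.2
  have hparts := mul_integral_cexp_neg_mul_ofReal u (continuous_one_sub_rpow hb.le).continuousOn
    (by simpa using hderiv) ((intervalIntegrable_one_sub_rpow hb).const_mul (-b))
  simp only [laplaceBeta, sub_self, Real.rpow_zero, one_mul, add_sub_cancel_right, hparts]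
  simp [hb.ne', mul_left_comm, ← sub_eq_add_neg]

lemma continuous_laplaceBeta (ha : 0 < a) (hb : 0 < b) :
    Continuous (laplaceBeta a b) := by
  refine continuous_iff_continuousAt.2 fun u => ?_
  have hbeta := intervalIntegrable_rpow_mul_one_sub_rpow_s12 ha hb
  refine intervalIntegral.continuousAt_of_dominated_interval
    (bound := fun s => Real.exp (‖u‖ + 1) * |s ^ (a - 1) * (1 - s) ^ (b - 1)|)
    (Eventually.of_forall fun v => (intervalIntegrable_laplaceBeta ha hb v).def'.1) ?_
    (hbeta.abs.const_mul _) (Eventually.of_forall fun s _ => by fun_prop)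
  filter_upwards [Metric.ball_mem_nhds u one_pos] with v hv
  refine Eventually.of_forall fun s hs => ?_
  rw [uIoc_of_le zero_le_one] at hs
  rw [norm_mul, Complex.norm_real, Real.norm_eq_abs]
  gcongr
  have hvu : ‖v‖ ≤ ‖u‖ + 1 := by
    have := norm_le_norm_add_norm_sub u v
    rw [mem_ball_iff_norm'] at hv
    linarith
  calc ‖cexp (-(v * s))‖ ≤ Real.exp ‖-(v * s)‖ := Complex.norm_exp_le_exp_norm _
    _ ≤ Real.exp (‖u‖ + 1) := by
      rw [Real.exp_le_exp, norm_neg, norm_mul, Complex.norm_real, Real.norm_of_nonneg hs.1.le]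
      exact (mul_le_of_le_one_right (norm_nonneg v) hs.2).trans hvu

lemma laplaceBeta_one_right (a : ℝ) (u : ℂ) :
    laplaceBeta a 1 u = ∫ s in (0 : ℝ)..1, cexp (-(u * s)) * ((s ^ (a - 1) : ℝ) : ℂ) := by
  simp [laplaceBeta]

lemma norm_cpow_mul_laplaceBeta_one_sub_Gamma_le_of_re_pos (ha : 0 < a) (ha₁ : a ≤ 1)
    {w : ℂ} (hw : 0 < w.re) :
    ‖w ^ (a : ℂ) * laplaceBeta a 1 w - Real.Gamma a‖ ≤ 2 * ‖w‖ ^ (a - 1) := by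
  have hw₀ : w ≠ 0 := by rintro rfl; simp at hw
  have hpow : w ^ (a : ℂ) ≠ 0 := by simp [Complex.cpow_eq_zero_iff, hw₀]
  set tail : ℂ := ∫ t in Ioi (1 : ℝ), cexp (-(w * t)) * ((t ^ (a - 1) : ℝ) : ℂ)
  have hsplit : laplaceBeta a 1 w + tail = w ^ (-a : ℂ) * Real.Gamma a := by
    have hint := integrableOn_cexp_neg_mul_rpow_Ioi ha hw
    rw [laplaceBeta_one_right, intervalIntegral.integral_interval_add_Ioi hint
      (hint.mono_set (Ioi_subset_Ioi zero_le_one)), integral_cexp_neg_mul_rpow_Ioi ha hw]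
  calc ‖w ^ (a : ℂ) * laplaceBeta a 1 w - Real.Gamma a‖ = ‖w ^ (a : ℂ) * tail‖ := by
        rw [eq_sub_of_add_eq hsplit, Complex.cpow_neg, mul_sub, mul_inv_cancel_left₀ hpow,
          sub_sub_cancel_left, norm_neg]
    _ = ‖w‖ ^ (a - 1) * ‖w * tail‖ := by
        have := norm_ne_zero_iff.2 hw₀
        rw [norm_mul, norm_mul, Complex.norm_cpow_real, Real.rpow_sub_one this]
        field_simp
    _ ≤ 2 * ‖w‖ ^ (a - 1) := by
        rw [mul_comm]
        gcongr
        exact norm_mul_integral_cexp_neg_mul_rpow_Ioi_le ha ha₁ hw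

lemma norm_cpow_mul_laplaceBeta_one_sub_Gamma_le (ha : 0 < a) (ha₁ : a ≤ 1) {w : ℂ}
    (hw : 0 ≤ w.re) (hw₀ : w ≠ 0) :
    ‖w ^ (a : ℂ) * laplaceBeta a 1 w - Real.Gamma a‖ ≤ 2 * ‖w‖ ^ (a - 1) := by
  have hclosure : w ∈ closure {v : ℂ | 0 < v.re} := by rwa [Complex.closure_setOfPred_lt_re]
  have hslit : w ∈ Complex.slitPlane := by
    rw [Complex.mem_slitPlane_iff]
    contrapose! hw₀
    exact Complex.ext (hw₀.1.antisymm hw) hw₀.2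
  refine ContinuousWithinAt.closure_le hclosure (ContinuousAt.continuousWithinAt ?_)
    (ContinuousAt.continuousWithinAt ?_)
    fun v => norm_cpow_mul_laplaceBeta_one_sub_Gamma_le_of_re_pos ha ha₁
  · exact (((continuousAt_cpow_const hslit).mul
      (continuous_laplaceBeta ha one_pos).continuousAt).sub_const _).norm
  · exact (continuousAt_id.norm.rpow_const (Or.inl (norm_ne_zero_iff.2 hw₀))).const_mul _

lemma exists_norm_cpow_mul_laplaceBeta_one_le (ha : 0 < a) (ha₁ : a ≤ 1) :
    ∃ M, ∀ w : ℂ, 0 ≤ w.re → ‖w ^ (a : ℂ) * laplaceBeta a 1 w‖ ≤ M := by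
  obtain ⟨C, hC⟩ := (isCompact_closedBall (0 : ℂ) 1).exists_bound_of_continuousOn
    (continuous_laplaceBeta ha one_pos).continuousOn
  refine ⟨max C (2 + ‖(Real.Gamma a : ℂ)‖), fun w hw => ?_⟩
  rcases le_total ‖w‖ 1 with hsmall | hlarge
  · rw [norm_mul, Complex.norm_cpow_real]
    exact le_max_of_le_left <| (mul_le_of_le_one_left (norm_nonneg _)
      (Real.rpow_le_one (norm_nonneg w) hsmall ha.le)).trans (hC w (by simpa using hsmall))
  · have hw₀ : w ≠ 0 := norm_pos_iff.1 (one_pos.trans_le hlarge)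
    refine le_max_of_le_right <| (norm_le_norm_sub_add _ (Real.Gamma a : ℂ)).trans ?_
    gcongr
    refine (norm_cpow_mul_laplaceBeta_one_sub_Gamma_le ha ha₁ hw hw₀).trans ?_
    exact mul_le_of_le_one_right zero_le_two
      (Real.rpow_le_one_of_one_le_of_nonpos hlarge (by linarith))

/-- The filter `u → ∞` within the closed right half plane. The point `0`, where
`u ^ a` branches, is left out. -/
noncomputable abbrev rightHalfPlaneAtInfty : Filter ℂ :=
  comap (fun u : ℂ => ‖u‖) atTop ⊓ 𝓟 {u : ℂ | 0 ≤ u.re ∧ u ≠ 0}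

lemma eventually_rightHalfPlaneAtInfty : ∀ᶠ u in rightHalfPlaneAtInfty, 0 ≤ u.re ∧ u ≠ 0 :=
  mem_inf_of_right (mem_principal_self _)

lemma tendsto_norm_rightHalfPlaneAtInfty :
    Tendsto (fun u : ℂ => ‖u‖) rightHalfPlaneAtInfty atTop :=
  tendsto_comap.mono_left inf_le_left

lemma tendsto_ofReal_mul_rightHalfPlaneAtInfty {r : ℝ} (hr : 0 < r) :
    Tendsto (fun u : ℂ => r * u) rightHalfPlaneAtInfty rightHalfPlaneAtInfty := by
  refine tendsto_inf.2 ⟨tendsto_comap_iff.2 ?_, tendsto_principal.2 ?_⟩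
  · simpa [Function.comp_def, abs_of_pos hr] using
      tendsto_norm_rightHalfPlaneAtInfty.const_mul_atTop hr
  · filter_upwards [eventually_rightHalfPlaneAtInfty] with u hu
    simpa [hr, hr.ne'] using hu

lemma tendsto_cpow_mul_laplaceBeta_one (ha : 0 < a) (ha₁ : a < 1) :
    Tendsto (fun u : ℂ => u ^ (a : ℂ) * laplaceBeta a 1 u) rightHalfPlaneAtInfty
      (𝓝 (Real.Gamma a)) := by
  rw [tendsto_iff_norm_sub_tendsto_zero]
  have hdecay := ((tendsto_rpow_neg_atTop (sub_pos.2 ha₁)).comp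
    tendsto_norm_rightHalfPlaneAtInfty).const_mul 2
  rw [mul_zero] at hdecay
  refine squeeze_zero' (Eventually.of_forall fun _ => norm_nonneg _) ?_ hdecay
  filter_upwards [eventually_rightHalfPlaneAtInfty] with u hu
  simpa using norm_cpow_mul_laplaceBeta_one_sub_Gamma_le ha ha₁.le hu.1 hu.2

lemma integral_cexp_neg_mul_rpow (a : ℝ) (u : ℂ) {r : ℝ} (hr : 0 < r) :
    ∫ t in (0 : ℝ)..r, cexp (-(u * t)) * ((t ^ (a - 1) : ℝ) : ℂ) =
      ((r ^ a : ℝ) : ℂ) * laplaceBeta a 1 (r * u) := by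
  have hscale := intervalIntegral.smul_integral_comp_mul_left (a := 0) (b := 1)
    (fun t : ℝ => cexp (-(u * t)) * ((t ^ (a - 1) : ℝ) : ℂ)) r
  rw [mul_zero, mul_one] at hscale
  rw [← hscale, laplaceBeta_one_right, Complex.real_smul, ← intervalIntegral.integral_const_mul,
    ← intervalIntegral.integral_const_mul]
  refine intervalIntegral.integral_congr_Ioo_of_le zero_le_one fun s hs => ?_
  have hr' : (r : ℂ) ≠ 0 := by exact_mod_cast hr.ne'
  simp only [Real.mul_rpow hr.le hs.1.le, Real.rpow_sub_one hr.ne', Complex.ofReal_mul,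
    Complex.ofReal_div, mul_left_comm u (r : ℂ), mul_assoc (r : ℂ) u]
  field_simp

lemma laplaceBeta_succ_right_eq_integral (ha : 0 < a) (hc : 0 < c) (u : ℂ) :
    laplaceBeta a (c + 1) u = c * ∫ r in (0 : ℝ)..1, (((1 - r) ^ (c - 1) : ℝ) : ℂ) *
      (((r ^ a : ℝ) : ℂ) * laplaceBeta a 1 (r * u)) := by
  let g : ℝ → ℂ := fun s => cexp (-(u * s)) * ((s ^ (a - 1) : ℝ) : ℂ)
  have hg : IntervalIntegrable g volume 0 1 := by
    simpa using intervalIntegrable_laplaceBeta ha one_pos u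
  have hgcont : ContinuousOn g (Ioo 0 1) := fun s hs => (ContinuousAt.mul (by fun_prop)
    (Real.continuousAt_rpow_const _ _ (Or.inl hs.1.ne')).ofReal).continuousWithinAt
  calc laplaceBeta a (c + 1) u = ∫ s in (0 : ℝ)..1, g s * (((1 - s) ^ c : ℝ) : ℂ) := by
        simp only [laplaceBeta, add_sub_cancel_right, Complex.ofReal_mul, mul_assoc, g]
    _ = c * ∫ s in (0 : ℝ)..1, (((1 - s) ^ (c - 1) : ℝ) : ℂ) * ∫ t in (0 : ℝ)..s, g t :=
        integral_mul_one_sub_rpow hg hgcont hc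
    _ = _ := by
        congr 1
        refine intervalIntegral.integral_congr_Ioo_of_le zero_le_one fun r hr => ?_
        simp only [g, integral_cexp_neg_mul_rpow a u hr.1]

lemma cpow_mul_laplaceBeta_succ_right_eq_integral (ha : 0 < a) (hc : 0 < c) {u : ℂ} (hu : u ≠ 0) :
    u ^ (a : ℂ) * laplaceBeta a (c + 1) u =
      c * ∫ r in (0 : ℝ)..1, (((1 - r) ^ (c - 1) : ℝ) : ℂ) *
        ((r * u) ^ (a : ℂ) * laplaceBeta a 1 (r * u)) := by
  rw [laplaceBeta_succ_right_eq_integral ha hc, mul_left_comm,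
    ← intervalIntegral.integral_const_mul]
  congr 1
  refine intervalIntegral.integral_congr_Ioo_of_le zero_le_one fun r hr => ?_
  simp only [ofReal_mul_cpow_ofReal hr.1 hu]
  ring

lemma tendsto_cpow_mul_laplaceBeta_of_lt_one (ha : 0 < a) (ha₁ : a < 1) (hc : 0 < c) :
    Tendsto (fun u : ℂ => u ^ (a : ℂ) * laplaceBeta a (c + 1) u) rightHalfPlaneAtInfty
      (𝓝 (Real.Gamma a)) := by
  obtain ⟨M, hM⟩ := exists_norm_cpow_mul_laplaceBeta_one_le ha ha₁.le
  have haverage : ∀ᶠ u in rightHalfPlaneAtInfty, u ^ (a : ℂ) * laplaceBeta a (c + 1) u =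
      c * ∫ r in (0 : ℝ)..1, (((1 - r) ^ (c - 1) : ℝ) : ℂ) *
        ((r * u) ^ (a : ℂ) * laplaceBeta a 1 (r * u)) :=
    eventually_rightHalfPlaneAtInfty.mono fun u hu =>
      cpow_mul_laplaceBeta_succ_right_eq_integral ha hc hu.2
  have hlim : c * ∫ r in (0 : ℝ)..1, (((1 - r) ^ (c - 1) : ℝ) : ℂ) * Real.Gamma a =
      Real.Gamma a := by
    have hc' : (c : ℂ) ≠ 0 := by exact_mod_cast hc.ne'
    rw [intervalIntegral.integral_mul_const, intervalIntegral.integral_ofReal,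
      integral_one_sub_rpow hc]
    push_cast
    field_simp
  rw [tendsto_congr' haverage, ← hlim]
  refine (intervalIntegral.tendsto_integral_filter_of_dominated_convergence
    (fun r => (1 - r) ^ (c - 1) * M) ?_ ?_
    ((intervalIntegrable_one_sub_rpow hc).mul_const M) ?_).const_mul (c : ℂ)
  · refine Eventually.of_forall fun u => Measurable.aestronglyMeasurable ?_
    have := (continuous_laplaceBeta ha one_pos).measurable
    fun_prop
  · filter_upwards [eventually_rightHalfPlaneAtInfty] with u hu
    refine Eventually.of_forall fun r hr => ?_
    rw [uIoc_of_le zero_le_one] at hr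
    have hweight_nonneg : 0 ≤ (1 - r) ^ (c - 1) := Real.rpow_nonneg (sub_nonneg.2 hr.2) _
    rw [norm_mul, Complex.norm_real, Real.norm_of_nonneg hweight_nonneg]
    gcongr
    refine hM _ ?_
    rw [Complex.re_ofReal_mul]
    exact mul_nonneg hr.1.le hu.1
  · refine Eventually.of_forall fun r hr => ?_
    rw [uIoc_of_le zero_le_one] at hr
    exact ((tendsto_cpow_mul_laplaceBeta_one ha ha₁).comp
      (tendsto_ofReal_mul_rightHalfPlaneAtInfty hr.1)).const_mul _

lemma norm_mul_laplaceBeta_one_le (hb : 1 ≤ b) {u : ℂ} (hu : 0 ≤ u.re) :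
    ‖u * laplaceBeta 1 b u‖ ≤ 2 := by
  have hbound := norm_mul_integral_cexp_neg_mul_le hu (f := fun s => (1 - s) ^ (b - 1))
    (f' := fun s => -(b - 1) * (1 - s) ^ (b - 1 - 1)) le_rfl zero_le_one
    (continuous_one_sub_rpow (sub_nonneg.2 hb)).continuousOn
    (fun s hs => hasDerivAt_one_sub_rpow (b - 1) hs.2)
    (fun s hs => mul_nonpos_of_nonpos_of_nonneg (by linarith)
      (Real.rpow_nonneg (sub_pos.2 hs.2).le _)) (Real.rpow_nonneg (by simp) _)
  simpa [laplaceBeta] using hbound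

lemma tendsto_laplaceBeta_one (hb : 1 ≤ b) :
    Tendsto (laplaceBeta 1 b) rightHalfPlaneAtInfty (𝓝 0) := by
  refine squeeze_zero_norm' ?_ (tendsto_norm_rightHalfPlaneAtInfty.const_div_atTop 2)
  filter_upwards [eventually_rightHalfPlaneAtInfty] with u hu
  rw [le_div_iff₀ (norm_pos_iff.2 hu.2), mul_comm, ← norm_mul]
  exact norm_mul_laplaceBeta_one_le hb hu.1

lemma tendsto_mul_laplaceBeta_one (hb : 2 ≤ b) :
    Tendsto (fun u : ℂ => u * laplaceBeta 1 b u) rightHalfPlaneAtInfty (𝓝 1) := by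
  have hrec (u : ℂ) : u * laplaceBeta 1 b u = 1 - (b - 1 : ℝ) * laplaceBeta 1 (b - 1) u := by
    simpa using mul_laplaceBeta_one_succ (b := b - 1) (by linarith) u
  simp only [hrec]
  simpa using ((tendsto_laplaceBeta_one (b := b - 1) (by linarith)).const_mul _).const_sub 1

lemma tendsto_cpow_mul_laplaceBeta_succ (ha : 0 < a) (hb : 0 < b)
    (hright : Tendsto (fun u : ℂ => u ^ (a : ℂ) * laplaceBeta a (b + 1) u)
      rightHalfPlaneAtInfty (𝓝 (Real.Gamma a)))
    (hleft : Tendsto (fun u : ℂ => u ^ (a : ℂ) * laplaceBeta a b u)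
      rightHalfPlaneAtInfty (𝓝 (Real.Gamma a))) :
    Tendsto (fun u : ℂ => u ^ ((a + 1 : ℝ) : ℂ) * laplaceBeta (a + 1) (b + 1) u)
      rightHalfPlaneAtInfty (𝓝 (Real.Gamma (a + 1))) := by
  have hlim := (hright.const_mul ((a + b : ℝ) : ℂ)).sub (hleft.const_mul (b : ℂ))
  have hGamma : ((a + b : ℝ) : ℂ) * Real.Gamma a - b * Real.Gamma a = Real.Gamma (a + 1) := by
    rw [Real.Gamma_add_one ha.ne']
    push_cast
    ring
  rw [hGamma] at hlim
  refine hlim.congr' ?_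
  filter_upwards [eventually_rightHalfPlaneAtInfty] with u hu
  rw [Complex.ofReal_add a 1, Complex.ofReal_one, Complex.cpow_add _ _ hu.2, Complex.cpow_one,
    mul_assoc, mul_laplaceBeta_succ_succ ha hb]
  push_cast
  ring

lemma tendsto_cpow_mul_laplaceBeta (ha : 0 < a) (hab : a + 1 ≤ b) :
    Tendsto (fun u : ℂ => u ^ (a : ℂ) * laplaceBeta a b u) rightHalfPlaneAtInfty
      (𝓝 (Real.Gamma a)) := by
  obtain ⟨n, hn⟩ := exists_nat_ge a
  induction n generalizing a b with
  | zero => exact absurd hn (by simpa using ha)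
  | succ n ih =>
    push_cast at hn
    rcases lt_trichotomy a 1 with hlt | rfl | hgt
    · simpa using tendsto_cpow_mul_laplaceBeta_of_lt_one ha hlt (c := b - 1) (by linarith)
    · simpa using tendsto_mul_laplaceBeta_one (b := b) (by linarith)
    · simpa using tendsto_cpow_mul_laplaceBeta_succ (a := a - 1) (b := b - 1) (by linarith)
        (by linarith) (ih (by linarith) (by linarith) (by linarith))
        (ih (by linarith) (by linarith) (by linarith))

end LaplaceBeta

lemma cexp_neg_mul_integral_cexp_mul (a b : ℝ) (u : ℂ) :
    cexp (-u) * ∫ t in Icc (-1 : ℝ) 1, cexp (t * u) *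
      (((1 - t) ^ (a - 1) * (1 + t) ^ (b - 1) : ℝ) : ℂ) =
        ((2 ^ (a + b - 1) : ℝ) : ℂ) * laplaceBeta a b (2 * u) := by
  rw [integral_Icc_eq_integral_Ioc, ← intervalIntegral.integral_of_le (by norm_num)]
  have hsubst := intervalIntegral.smul_integral_comp_sub_mul (a := 0) (b := 1)
    (fun t : ℝ => cexp (t * u) * (((1 - t) ^ (a - 1) * (1 + t) ^ (b - 1) : ℝ) : ℂ)) 2 1
  rw [show (1 : ℝ) - 2 * 1 = -1 by norm_num, show (1 : ℝ) - 2 * 0 = 1 by norm_num] at hsubst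
  rw [← hsubst, laplaceBeta, Complex.real_smul, ← mul_assoc,
    ← intervalIntegral.integral_const_mul, ← intervalIntegral.integral_const_mul]
  refine intervalIntegral.integral_congr_Ioo_of_le zero_le_one fun s hs => ?_
  have hleft : (1 - (1 - 2 * s)) ^ (a - 1) = (2 : ℝ) ^ (a - 1) * s ^ (a - 1) := by
    rw [sub_sub_cancel, Real.mul_rpow zero_le_two hs.1.le]
  have hright : (1 + (1 - 2 * s)) ^ (b - 1) = (2 : ℝ) ^ (b - 1) * (1 - s) ^ (b - 1) := by
    rw [← Real.mul_rpow zero_le_two (sub_pos.2 hs.2).le]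
    ring_nf
  have hpow : (2 : ℝ) ^ (a + b - 1) = 2 * 2 ^ (a - 1) * 2 ^ (b - 1) := by
    rw [show a + b - 1 = 1 + (a - 1) + (b - 1) by ring, Real.rpow_add two_pos,
      Real.rpow_add two_pos, Real.rpow_one]
  have hexp : cexp (-(2 * u * s)) = cexp (-u) * cexp (((1 - 2 * s : ℝ) : ℂ) * u) := by
    rw [← Complex.exp_add]
    congr 1
    push_cast
    ring
  simp only [hleft, hright, hpow, hexp, Complex.ofReal_mul, Complex.ofReal_ofNat]
  ring

lemma Gamma_add_half_div_mul_two_rpow {k : ℝ} (hk : 0 < k) :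
    Real.Gamma (k + 1 / 2) / (Real.Gamma (1 / 2) * Real.Gamma k) * (2 ^ k * Real.Gamma k) =
      Real.Gamma (2 * k + 1) / (2 ^ k * Real.Gamma (k + 1)) := by
  have hGamma : 0 < Real.Gamma k := Real.Gamma_pos_of_pos hk
  have hGamma_add_half : Real.Gamma (k + 1 / 2) =
      Real.Gamma (2 * k) * (2 / (2 ^ k * 2 ^ k)) * √Real.pi / Real.Gamma k := by
    rw [eq_div_iff hGamma.ne', mul_comm, Real.Gamma_mul_Gamma_add_half, Real.rpow_sub two_pos,
      Real.rpow_one, two_mul k, Real.rpow_add two_pos]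
  rw [Real.Gamma_add_one hk.ne', Real.Gamma_add_one (by positivity), hGamma_add_half,
    Real.Gamma_one_half_eq]
  field_simp

lemma tendsto_cpow_mul_exp_neg_mul_Dk {k : ℝ} (hk : 0 < k) :
    Tendsto (fun u : ℂ => u ^ (k : ℂ) * cexp (-u) * Dk k u) rightHalfPlaneAtInfty
      (𝓝 ((Real.Gamma (2 * k + 1) / (2 ^ k * Real.Gamma (k + 1)) : ℝ) : ℂ)) := by
  have hlim := ((tendsto_cpow_mul_laplaceBeta hk le_rfl).comp
    (tendsto_ofReal_mul_rightHalfPlaneAtInfty two_pos)).const_mul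
      ((Real.Gamma (k + 1 / 2) / (Real.Gamma (1 / 2) * Real.Gamma k) * 2 ^ k : ℝ) : ℂ)
  rw [← Complex.ofReal_mul, mul_assoc, Gamma_add_half_div_mul_two_rpow hk] at hlim
  refine hlim.congr' ?_
  filter_upwards [eventually_rightHalfPlaneAtInfty] with u hu
  have hDk := cexp_neg_mul_integral_cexp_mul k (k + 1) u
  have hpow : (2 : ℝ) ^ (k + (k + 1) - 1) = 2 ^ k * 2 ^ k := by
    rw [← add_assoc, add_sub_cancel_right, Real.rpow_add two_pos]
  rw [hpow, add_sub_cancel_right] at hDk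
  rw [Function.comp_apply, ofReal_mul_cpow_ofReal two_pos hu.2, Dk, mul_assoc (u ^ (k : ℂ)),
    mul_left_comm (cexp (-u)), hDk]
  push_cast
  ring

/-- Asymptotics of the rank-one Dunkl kernel in the closed right half plane:
`z^k e^{-zxy} D_k(zxy) → Γ(2k+1)/(2^k Γ(k+1) (xy)^k)` as `z → ∞` with `Re z ≥ 0`. -/
theorem dunkl_stmt12 (k : ℝ) (hk : 0 < k) (x y : ℝ) (hx : 0 < x) (hy : 0 < y) :
    Tendsto (fun z : ℂ => z ^ (k : ℂ) * Complex.exp (-(z * ((x : ℂ) * (y : ℂ)))) *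
        Dk k (z * ((x : ℂ) * (y : ℂ))))
      (Filter.comap (fun z : ℂ => ‖z‖) atTop ⊓
        Filter.principal {z : ℂ | 0 ≤ z.re ∧ z ≠ 0})
      (nhds ((Real.Gamma (2 * k + 1) / (2 ^ k * Real.Gamma (k + 1) * (x * y) ^ k) : ℝ) : ℂ)) := by
  have hxy : 0 < x * y := mul_pos hx hy
  have hlim := ((tendsto_cpow_mul_exp_neg_mul_Dk hk).comp
    (tendsto_ofReal_mul_rightHalfPlaneAtInfty hxy)).div_const (((x * y) ^ k : ℝ) : ℂ)
  rw [← Complex.ofReal_div, div_div] at hlim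
  refine hlim.congr' ?_
  filter_upwards [eventually_rightHalfPlaneAtInfty] with z hz
  have hpow : (((x * y) ^ k : ℝ) : ℂ) ≠ 0 := by exact_mod_cast (Real.rpow_pos_of_pos hxy k).ne'
  have hscale : z * (x * y) = (x * y : ℝ) * z := by push_cast; ring
  rw [hscale, Function.comp_apply, ofReal_mul_cpow_ofReal hxy hz.2]
  field_simp
end
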